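/- Let $f_1,\dots,f_n$ be real analytic and not identically zero near the origin of $\mathbb{R}^2$, let $\gamma_1,\dots,\gamma_n\in\mathbb{R}$, and let $E\subset\mathbb{R}^2$ be either a disk centered at the origin or a finite disjoint union of open regions $E_j$, each of which is one of the two regions bounded by a circle $x^2+y^2=r_0^2$ and two curves joining the origin to that circle; each curve is half of a graph $y=h(|x|^{1/N})$ or $x=h(|y|^{1/N})$ with $h$ real analytic and $h(0)=0$, and all these boundary curves of $E$ are pairwise disjoint except at the origin. Assume that $g=\chi_E\prod_{i=1}^n|f_i|^{\gamma_i}$ is integrable near the origin. Let $\epsilon>0$ and $d\in\{0,1\}$ be the ball exponents of $g$: for some $c_1,c_2>0$ one has $c_1r^{\epsilon}|\ln r|^d\le\int_{x^2+y^2<r^2}g\,dx\,dy\le c_2r^{\epsilon}|\ln r|^d$ for all sufficiently small $r>0$. Let $n_i$ denote the order of the zero of $f_i$ at the origin. Then, for every sufficiently small disk $B$ centered at the origin, the following holds. Let $B'\subset B$ be a wedge of the first type, that is, a region bounded by two rays from the origin and the boundary of $B$ such that (i) for each $i$ there are positive constants $c_i,c_i'$ with $c_i(x^2+y^2)^{n_i/2}<|f_i(x,y)|<c_i'(x^2+y^2)^{n_i/2}$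 on $B'$; (ii) the boundary curves of $E$ do not meet the closure of $B'$ except at the origin. Let $A,C$ be constants. Then there is a constant $C_a$ (depending on $g$, $B'$, $A$, $C$, but not otherwise on $\alpha$) such that, for every real function $\alpha$ on $\mathbb{R}^2$ that is $C^1$ away from the origin with $|\alpha(x,y)|\le A$ and $|\nabla\alpha(x,y)|\le A(x^2+y^2)^{-1/2}$ and that satisfies (iii) $\displaystyle\Big|\int_{B'}\alpha\, g\,e^{i(tx+uy)}\,dx\,dy\Big|\le C\int_{B'}(1+|tx|+|uy|)^{-1}g\,dx\,dy$ for all $(t,u)\in\mathbb{R}^2$, and for all $(t,u)\in\mathbb{R}^2$, the quantity $\big|\int_{B'}\alpha\,g\,e^{i(tx+uy)}\,dx\,dy\big|$ is at most $$C_a(2+|(t,u)|)^{-\epsilon}(\ln(2+|(t,u)|))^{d}\ \text{ if }\epsilon<1,\qquad C_a(2+|(t,u)|)^{-1}(\ln(2+|(t,u)|))^{d+1}\ \text{ if }\epsilon=1,$$ $$C_a(2+|(t,u)|)^{-1}\ \text{ if }\epsilon>1.$$ -/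

import Mathlib

open MeasureTheory Set Filter
open scoped Topology

noncomputable section

/-- The Euclidean magnitude `|(x,y)| = √(x²+y²)` of a point of `ℝ²`. -/
def nrm2 (p : ℝ × ℝ) : ℝ := Real.sqrt (p.1 ^ 2 + p.2 ^ 2)

/-- The open Euclidean disk `{(x,y) : x²+y² < r²}` centered at the origin. -/
def disk2 (r : ℝ) : Set (ℝ × ℝ) := {p : ℝ × ℝ | p.1 ^ 2 + p.2 ^ 2 < r ^ 2}

/-- The function `g = χ_E · ∏ᵢ |fᵢ|^(γᵢ)`. -/
def stdFun (n : ℕ) (f : Fin n → ℝ × ℝ → ℝ) (γ : Fin n → ℝ) (E : Set (ℝ × ℝ)) :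
    ℝ × ℝ → ℝ :=
  E.indicator fun p => ∏ i, |f i p| ^ (γ i)

/-- A boundary curve: a half (`σ = 1` or `σ = -1`) of a graph `y = h(|x|^{1/N})` or
`x = h(|y|^{1/N})` with `h` real analytic and `h 0 = 0`, followed from the origin until it
reaches the circle of radius `r₀`. -/
def IsPuiseuxBdryCurve (r₀ : ℝ) (C : Set (ℝ × ℝ)) : Prop :=
  ∃ (N : ℕ) (h : ℝ → ℝ) (σ a : ℝ),
    0 < N ∧ (σ = 1 ∨ σ = -1) ∧ 0 < a ∧
    AnalyticOnNhd ℝ h (Icc (0:ℝ) (a ^ ((N:ℝ)⁻¹))) ∧ h 0 = 0 ∧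
    (∀ x ∈ Ico (0:ℝ) a, x ^ 2 + h (x ^ ((N:ℝ)⁻¹)) ^ 2 < r₀ ^ 2) ∧
    a ^ 2 + h (a ^ ((N:ℝ)⁻¹)) ^ 2 = r₀ ^ 2 ∧
    (C = (fun x : ℝ => ((σ * x, h (x ^ ((N:ℝ)⁻¹))) : ℝ × ℝ)) '' Icc (0:ℝ) a ∨
     C = (fun x : ℝ => ((h (x ^ ((N:ℝ)⁻¹)), σ * x) : ℝ × ℝ)) '' Icc (0:ℝ) a)

/-- The admissible sets `E`: either a disk centered at the origin, or a finite disjoint union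
of regions (open connected sets), each of which is one of the two regions bounded by two curves
joining the origin to the circle of radius `r₀` together with that circle; all the boundary
curves are pairwise disjoint away from the origin. -/
def IsStdDomain (E : Set (ℝ × ℝ)) : Prop :=
  (∃ r₀ > (0:ℝ), E = disk2 r₀) ∨
  (∃ r₀ > (0:ℝ), ∃ m : ℕ, ∃ Es : Fin m → Set (ℝ × ℝ), ∃ Cs : Fin m → Fin 2 → Set (ℝ × ℝ),
    E = Set.iUnion Es ∧
    (Pairwise fun i j => Disjoint (Es i) (Es j)) ∧
    (∀ i, IsOpen (Es i) ∧ IsConnected (Es i) ∧ Es i ⊆ disk2 r₀ ∧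
      frontier (Es i) ∩ disk2 r₀ = (Cs i 0 ∪ Cs i 1) ∩ disk2 r₀) ∧
    (∀ i j, IsPuiseuxBdryCurve r₀ (Cs i j)) ∧
    (Pairwise fun (q q' : Fin m × Fin 2) =>
      Disjoint (Cs q.1 q.2 \ {0}) (Cs q'.1 q'.2 \ {0})))

/-- The standard form: the `fᵢ` are real analytic and not identically zero near the origin,
`g = χ_E ∏ |fᵢ|^(γᵢ)` is integrable near the origin, and `E` is an admissible domain. -/
structure StandardForm (n : ℕ) (f : Fin n → ℝ × ℝ → ℝ) (γ : Fin n → ℝ)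
    (E : Set (ℝ × ℝ)) : Prop where
  analytic : ∃ U ∈ 𝓝 (0 : ℝ × ℝ), ∀ i, AnalyticOnNhd ℝ (f i) U
  nontriv : ∀ i, ¬ (∀ᶠ p in 𝓝 (0 : ℝ × ℝ), f i p = 0)
  integ : ∃ U ∈ 𝓝 (0 : ℝ × ℝ), IntegrableOn (stdFun n f γ E) U
  domain : IsStdDomain E

/-- `ε`, `d` are the ball exponents of `g`: `ε > 0`, `d ∈ {0,1}` and
`c₁ r^ε |log r|^d ≤ ∫_{x²+y²<r²} g ≤ c₂ r^ε |log r|^d` for all small `r > 0`. -/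
def BallBound (g : ℝ × ℝ → ℝ) (ε : ℝ) (d : ℕ) : Prop :=
  0 < ε ∧ d ≤ 1 ∧ ∃ c₁ > (0:ℝ), ∃ c₂ > (0:ℝ), ∃ c₃ > (0:ℝ), ∀ r : ℝ, 0 < r → r < c₃ →
    c₁ * r ^ ε * |Real.log r| ^ d ≤ (∫ p in disk2 r, g p) ∧
    (∫ p in disk2 r, g p) ≤ c₂ * r ^ ε * |Real.log r| ^ d

/-- The order of the zero of `f` at the origin: the least order of a nonzero derivative. -/
def vanishingOrder (f : ℝ × ℝ → ℝ) : ℕ :=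
  sInf {k : ℕ | iteratedFDeriv ℝ k f 0 ≠ 0}

/-- The Euclidean length `|∇α(p)|` of the gradient. -/
def gradNorm (α : ℝ × ℝ → ℝ) (p : ℝ × ℝ) : ℝ :=
  nrm2 (fderiv ℝ α p (1, 0), fderiv ℝ α p (0, 1))

/-- The conditions on the amplitude `α`: it is `C¹` away from the origin, bounded by `A`, and
its gradient is bounded by `A (x²+y²)^{-1/2}`. -/
def AlphaBound (α : ℝ × ℝ → ℝ) (A : ℝ) : Prop :=
  ContDiffOn ℝ 1 α {(0:ℝ×ℝ)}ᶜ ∧ (∀ p, |α p| ≤ A) ∧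
  ∀ p : ℝ × ℝ, p ≠ 0 → gradNorm α p ≤ A * (nrm2 p)⁻¹

/-- The oscillatory integral `∫_S h(x,y) e^{i(tx+uy)} dx dy`. -/
def oscInt (h : ℝ × ℝ → ℝ) (S : Set (ℝ × ℝ)) (t u : ℝ) : ℂ :=
  ∫ p in S, (h p : ℂ) * Complex.exp (Complex.I * ((t : ℂ) * (p.1 : ℂ) + (u : ℂ) * (p.2 : ℂ)))

/-- A wedge of radius `r` at the origin: a region bounded by two rays from the origin and the
circle of radius `r`. -/
def IsWedge (r : ℝ) (W : Set (ℝ × ℝ)) : Prop :=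
  ∃ θ₁ θ₂ : ℝ, θ₁ < θ₂ ∧ θ₂ ≤ θ₁ + 2 * Real.pi ∧
    W = {p : ℝ × ℝ | ∃ ρ θ : ℝ, 0 < ρ ∧ ρ < r ∧ θ₁ < θ ∧ θ < θ₂ ∧
      p = (ρ * Real.cos θ, ρ * Real.sin θ)}

/-- The geometric conditions on a wedge of the first type: on it each `|fᵢ|` is comparable to
`|(x,y)|^{nᵢ}`, with `nᵢ` the order of the zero of `fᵢ` at the origin, and its closure does not
meet the boundary curves of `E` except at the origin. (In a small disk around the origin the
boundary of `E` consists exactly of the boundary curves.) -/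
structure IsFirstTypeWedge (n : ℕ) (f : Fin n → ℝ × ℝ → ℝ) (E : Set (ℝ × ℝ)) (r : ℝ)
    (W : Set (ℝ × ℝ)) : Prop where
  wedge : IsWedge r W
  comparable : ∀ i, ∃ c > (0:ℝ), ∃ c' > (0:ℝ), ∀ p ∈ W,
    c * nrm2 p ^ vanishingOrder (f i) < |f i p| ∧
    |f i p| < c' * nrm2 p ^ vanishingOrder (f i)
  boundary : Disjoint (closure W \ {0}) (frontier E)

/-- The first-type estimate on `W` with constant `C`:
`|∫_W α g e^{i(tx+uy)}| ≤ C ∫_W (1+|tx|+|uy|)^{-1} g` for all `(t,u)`. -/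
def FirstTypeEstimate (α g : ℝ × ℝ → ℝ) (W : Set (ℝ × ℝ)) (C : ℝ) : Prop :=
  ∀ t u : ℝ, ‖oscInt (fun p => α p * g p) W t u‖ ≤
    C * ∫ p in W, (1 + |t * p.1| + |u * p.2|)⁻¹ * g p

end

/-! ### Polar coordinates -/

/-- The point with polar coordinates `q = (ρ, θ)`. -/
noncomputable def polarPt (q : ℝ × ℝ) : ℝ × ℝ := (q.1 * Real.cos q.2, q.1 * Real.sin q.2)

theorem continuous_polarPt : Continuous polarPt := by
  unfold polarPt; fun_prop

theorem nrm2_polarPt {q : ℝ × ℝ} (hq : 0 ≤ q.1) : nrm2 (polarPt q) = q.1 := by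
  have h : (q.1 * Real.cos q.2) ^ 2 + (q.1 * Real.sin q.2) ^ 2 = q.1 ^ 2 := by
    linear_combination q.1 ^ 2 * Real.sin_sq_add_cos_sq q.2
  simp only [nrm2, polarPt, h, Real.sqrt_sq hq]

theorem nrm2_nonneg (p : ℝ × ℝ) : 0 ≤ nrm2 p := Real.sqrt_nonneg _

theorem nrm2_sq (p : ℝ × ℝ) : nrm2 p ^ 2 = p.1 ^ 2 + p.2 ^ 2 :=
  Real.sq_sqrt (by positivity)

theorem norm_le_nrm2 (p : ℝ × ℝ) : ‖p‖ ≤ nrm2 p := by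
  rw [Prod.norm_def]
  exact max_le (Real.abs_le_sqrt (by nlinarith [sq_nonneg p.2]))
    (Real.abs_le_sqrt (by nlinarith [sq_nonneg p.1]))

theorem continuous_nrm2 : Continuous nrm2 := by
  unfold nrm2; fun_prop

theorem nrm2_zero : nrm2 0 = 0 := by simp [nrm2]

theorem mem_disk2_iff {p : ℝ × ℝ} {r : ℝ} (hr : 0 ≤ r) : p ∈ disk2 r ↔ nrm2 p < r := by
  rw [← abs_of_nonneg (nrm2_nonneg p), ← abs_of_nonneg hr, ← sq_lt_sq, nrm2_sq, abs_of_nonneg hr]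
  rfl

theorem injOn_polarPt {θ₁ θ₂ : ℝ} (h : θ₂ ≤ θ₁ + 2 * Real.pi) :
    InjOn polarPt (Ioi 0 ×ˢ Ioo θ₁ θ₂) := by
  rintro ⟨ρ, θ⟩ ⟨hρ, hθ⟩ ⟨ρ', θ'⟩ ⟨hρ', hθ'⟩ heq
  simp only [mem_Ioi, mem_Ioo] at hρ hθ hρ' hθ'
  have h1 : ρ = ρ' := by
    have := congrArg nrm2 heq
    rwa [nrm2_polarPt hρ.le, nrm2_polarPt hρ'.le] at this
  subst h1
  simp only [polarPt, Prod.mk.injEq] at heq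
  have h2 := Real.Angle.cos_sin_inj (mul_left_cancel₀ hρ.ne' heq.1)
    (mul_left_cancel₀ hρ.ne' heq.2)
  obtain ⟨k, hk⟩ := Real.Angle.angle_eq_iff_two_pi_dvd_sub.1 h2
  have hpi := Real.pi_pos
  have hk1 : (k : ℝ) < 1 := by
    by_contra! hc
    nlinarith
  have hk2 : (-1 : ℝ) < k := by
    by_contra! hc
    nlinarith
  have hk0 : k = 0 := by
    have a : k < 1 := by exact_mod_cast hk1
    have b : -1 < k := by exact_mod_cast hk2
    omega
  rw [hk0] at hk
  simp only [Int.cast_zero, mul_zero] at hk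
  rw [sub_eq_zero.1 hk]

theorem setIntegral_image_polarPt {F : Type*} [NormedAddCommGroup F] [NormedSpace ℝ F]
    {θ₁ θ₂ a b : ℝ} (h : θ₂ ≤ θ₁ + 2 * Real.pi) (ha : 0 ≤ a) (g : ℝ × ℝ → F) :
    ∫ p in polarPt '' (Ioo a b ×ˢ Ioo θ₁ θ₂), g p =
      ∫ q in Ioo a b ×ˢ Ioo θ₁ θ₂, q.1 • g (polarPt q) := by
  have hsub : Ioo a b ×ˢ Ioo θ₁ θ₂ ⊆ Ioi (0 : ℝ) ×ˢ Ioo θ₁ θ₂ :=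
    prod_mono (fun x hx => ha.trans_lt hx.1) subset_rfl
  have hm : MeasurableSet (Ioo a b ×ˢ Ioo θ₁ θ₂) := measurableSet_Ioo.prod measurableSet_Ioo
  rw [integral_image_eq_integral_abs_det_fderiv_smul volume hm (f := polarPt)
    (f' := fderivPolarCoordSymm)
    (fun x _ => (hasFDerivAt_polarCoord_symm x).hasFDerivWithinAt) ((injOn_polarPt h).mono hsub)]
  refine setIntegral_congr_fun hm fun q hq => ?_
  simp only [det_fderivPolarCoordSymm, abs_of_pos (mem_Ioi.1 (hsub hq).1)]

theorem isWedge_eq_image {r : ℝ} {W : Set (ℝ × ℝ)} (h : IsWedge r W) :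
    ∃ θ₁ θ₂ : ℝ, θ₁ < θ₂ ∧ θ₂ ≤ θ₁ + 2 * Real.pi ∧
      W = polarPt '' (Ioo 0 r ×ˢ Ioo θ₁ θ₂) := by
  obtain ⟨θ₁, θ₂, h1, h2, rfl⟩ := h
  refine ⟨θ₁, θ₂, h1, h2, ?_⟩
  ext p
  constructor
  · rintro ⟨ρ, θ, a, b, c, d, rfl⟩
    exact ⟨(ρ, θ), ⟨⟨a, b⟩, c, d⟩, rfl⟩
  · rintro ⟨⟨ρ, θ⟩, ⟨⟨a, b⟩, c, d⟩, rfl⟩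
    exact ⟨ρ, θ, a, b, c, d, rfl⟩

/-- A preconnected set that misses the frontier of `E` lies in `E` or in its complement. -/
theorem IsPreconnected.subset_or_disjoint_of_frontier {X : Type*} [TopologicalSpace X]
    {s E : Set X} (hs : IsPreconnected s) (h : Disjoint s (frontier E)) :
    s ⊆ E ∨ Disjoint s E := by
  have hcov : s ⊆ interior E ∪ (closure E)ᶜ := by
    intro x hx
    by_cases hc : x ∈ closure E
    · left
      by_contra hi
      exact disjoint_left.1 h hx ⟨hc, hi⟩
    · exact Or.inr hc
  have hd : Disjoint (interior E) (closure E)ᶜ :=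
    disjoint_compl_right_iff_subset.2 (interior_subset.trans subset_closure)
  rcases IsPreconnected.subset_or_subset isOpen_interior isClosed_closure.isOpen_compl hd hcov hs
    with h1 | h1
  · exact Or.inl (h1.trans interior_subset)
  · exact Or.inr (disjoint_left.2 fun x hx hE => h1 hx (subset_closure hE))

/-! ### Derivative of an analytic function near a zero -/

/-- An analytic function whose derivatives at `0` of order `< m` vanish is `O(‖p‖ ^ m)`. -/
theorem AnalyticAt.isBigO_norm_pow {V F : Type*} [NormedAddCommGroup V] [NormedSpace ℝ V]
    [NormedAddCommGroup F] [NormedSpace ℝ F] [CompleteSpace F] {f : V → F}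
    (hf : AnalyticAt ℝ f 0) {m : ℕ} (hm : ∀ k < m, iteratedFDeriv ℝ k f 0 = 0) :
    f =O[𝓝 0] fun y => ‖y‖ ^ m := by
  obtain ⟨p, R, hp⟩ := hf
  have h := HasFPowerSeriesAt.isBigO_sub_partialSum_pow ⟨R, hp⟩ m
  refine h.congr_left fun y => ?_
  have : p.partialSum m y = 0 := by
    refine Finset.sum_eq_zero fun k hk => ?_
    have h1 := hp.factorial_smul y k
    rw [hm k (Finset.mem_range.1 hk)] at h1
    rw [← Nat.cast_smul_eq_nsmul ℝ] at h1
    exact (smul_eq_zero.1 h1).resolve_left (Nat.cast_ne_zero.2 k.factorial_ne_zero)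
  simp [this]

theorem fderiv_mul_nrm2_le {f : ℝ × ℝ → ℝ} (hf : AnalyticAt ℝ f 0) :
    ∃ K > (0 : ℝ), ∀ᶠ p in 𝓝 (0 : ℝ × ℝ),
      ‖fderiv ℝ f p‖ * nrm2 p ≤ K * nrm2 p ^ vanishingOrder f := by
  rcases Nat.eq_zero_or_eq_succ_pred (vanishingOrder f) with h0 | h0
  · refine ⟨1, one_pos, ?_⟩
    have hc : ContinuousAt (fun p => ‖fderiv ℝ f p‖ * nrm2 p) 0 :=
      hf.fderiv.continuousAt.norm.mul continuous_nrm2.continuousAt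
    have := hc.eventually_lt (continuousAt_const (y := (1 : ℝ))) (by simp [nrm2_zero])
    filter_upwards [this] with p hp
    simpa [h0] using hp.le
  · set m := (vanishingOrder f).pred
    have hz : ∀ k < m, iteratedFDeriv ℝ k (fderiv ℝ f) 0 = 0 := by
      intro k hk
      have h1 : iteratedFDeriv ℝ (k + 1) f 0 = 0 := by
        by_contra hne
        have : vanishingOrder f ≤ k + 1 := Nat.sInf_le hne
        omega
      rw [iteratedFDeriv_succ_eq_comp_right] at h1
      exact (LinearIsometryEquiv.map_eq_zero_iff
        (continuousMultilinearCurryRightEquiv' ℝ k (ℝ × ℝ) ℝ).symm).1 h1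
    obtain ⟨K, hK, hb⟩ := (hf.fderiv.isBigO_norm_pow hz).exists_pos
    refine ⟨K, hK, ?_⟩
    filter_upwards [hb.bound] with p hp
    rw [h0, pow_succ, ← mul_assoc]
    refine mul_le_mul_of_nonneg_right (hp.trans ?_) (nrm2_nonneg p)
    rw [norm_pow, norm_norm]
    gcongr
    exact norm_le_nrm2 p

/-! ### Symbols on a set -/

/-- `G` is `C¹` near the points of `Z`, of size at most `K |p| ^ s` there, with derivative of
size at most `K |p| ^ (s - 1)`. -/
structure IsSymbolOn (Z : Set (ℝ × ℝ)) (s K : ℝ) (G : ℝ × ℝ → ℝ) : Prop where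
  contDiffAt : ∀ p ∈ Z, ContDiffAt ℝ 1 G p
  abs_le : ∀ p ∈ Z, |G p| ≤ K * nrm2 p ^ s
  fderiv_le : ∀ p ∈ Z, ‖fderiv ℝ G p‖ ≤ K * nrm2 p ^ (s - 1)

theorem IsSymbolOn.mul {Z : Set (ℝ × ℝ)} (hZ : ∀ p ∈ Z, 0 < nrm2 p) {s₁ s₂ K₁ K₂ : ℝ}
    {G₁ G₂ : ℝ × ℝ → ℝ} (h₁ : IsSymbolOn Z s₁ K₁ G₁)
    (h₂ : IsSymbolOn Z s₂ K₂ G₂) :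
    IsSymbolOn Z (s₁ + s₂) (2 * (K₁ * K₂)) fun p => G₁ p * G₂ p := by
  have key : ∀ a b A B : ℝ, 0 ≤ a → 0 ≤ b → a ≤ A → b ≤ B → a * b ≤ A * B := fun a b A B h1 h2 h3 h4 =>
    mul_le_mul h3 h4 h2 (h1.trans h3)
  refine ⟨fun p hp => (h₁.contDiffAt p hp).mul (h₂.contDiffAt p hp), fun p hp => ?_, fun p hp => ?_⟩
  · have h := key _ _ _ _ (abs_nonneg _) (abs_nonneg _) (h₁.abs_le p hp) (h₂.abs_le p hp)
    rw [abs_mul, Real.rpow_add (hZ p hp)]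
    have := (mul_nonneg (abs_nonneg (G₁ p)) (abs_nonneg (G₂ p))).trans h
    linarith
  · have hd := ((h₁.contDiffAt p hp).differentiableAt (by simp)).hasFDerivAt.mul
      ((h₂.contDiffAt p hp).differentiableAt (by simp)).hasFDerivAt
    have hd' : fderiv ℝ (fun p => G₁ p * G₂ p) p = _ := hd.fderiv
    rw [hd']
    have e1 : nrm2 p ^ (s₁ + s₂ - 1) = nrm2 p ^ s₁ * nrm2 p ^ (s₂ - 1) := by
      rw [← Real.rpow_add (hZ p hp)]; ring_nf
    have e2 : nrm2 p ^ (s₁ + s₂ - 1) = nrm2 p ^ s₂ * nrm2 p ^ (s₁ - 1) := by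
      rw [← Real.rpow_add (hZ p hp)]; ring_nf
    have b1 := key _ _ _ _ (abs_nonneg _) (norm_nonneg _) (h₁.abs_le p hp) (h₂.fderiv_le p hp)
    have b2 := key _ _ _ _ (abs_nonneg _) (norm_nonneg _) (h₂.abs_le p hp) (h₁.fderiv_le p hp)
    refine (norm_add_le _ _).trans ?_
    rw [norm_smul, norm_smul, Real.norm_eq_abs, Real.norm_eq_abs]
    calc _ ≤ K₁ * nrm2 p ^ s₁ * (K₂ * nrm2 p ^ (s₂ - 1)) +
          K₂ * nrm2 p ^ s₂ * (K₁ * nrm2 p ^ (s₁ - 1)) := add_le_add b1 b2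
      _ = K₁ * K₂ * nrm2 p ^ (s₁ + s₂ - 1) + K₁ * K₂ * nrm2 p ^ (s₁ + s₂ - 1) := by
        nth_rewrite 1 [e1]; rw [e2]; ring
      _ = _ := by ring

theorem IsSymbolOn.prod {Z : Set (ℝ × ℝ)} (hZ : ∀ p ∈ Z, 0 < nrm2 p) {ι : Type*}
    (S : Finset ι) (s : ι → ℝ) (G : ι → ℝ × ℝ → ℝ)
    (h : ∀ i ∈ S, ∃ K, 0 ≤ K ∧ IsSymbolOn Z (s i) K (G i)) :
    ∃ K, 0 ≤ K ∧ IsSymbolOn Z (∑ i ∈ S, s i) K fun p => ∏ i ∈ S, G i p := by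
  classical
  induction S using Finset.induction_on with
  | empty =>
    refine ⟨1, zero_le_one, fun p _ => ?_, fun p _ => ?_, fun p hp => ?_⟩
    · simpa using contDiffAt_const
    · simp
    · simp only [Finset.prod_empty, Finset.sum_empty, fderiv_const_apply, norm_zero]
      have := hZ p hp
      positivity
  | insert a S ha ih =>
    obtain ⟨K₁, h1, hs1⟩ := h a (Finset.mem_insert_self _ _)
    obtain ⟨K₂, h2, hs2⟩ := ih fun i hi => h i (Finset.mem_insert_of_mem hi)
    refine ⟨2 * (K₁ * K₂), by positivity, ?_⟩
    simp only [Finset.sum_insert ha, Finset.prod_insert ha]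
    exact IsSymbolOn.mul hZ hs1 hs2

/-- Comparison of `rpow` of two comparable positive quantities. -/
theorem rpow_comparable {c c' : ℝ} (hc : 0 < c) (hc' : 0 < c') (γ : ℝ) :
    ∃ k > (0 : ℝ), ∃ K > (0 : ℝ), ∀ x y : ℝ, 0 < y → c * y ≤ x → x ≤ c' * y →
      k * y ^ γ ≤ x ^ γ ∧ x ^ γ ≤ K * y ^ γ := by
  have h1 := Real.rpow_pos_of_pos hc γ
  have h2 := Real.rpow_pos_of_pos hc' γ
  refine ⟨min (c ^ γ) (c' ^ γ), lt_min h1 h2, max (c ^ γ) (c' ^ γ), lt_max_of_lt_left h1,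
    fun x y hy hl hu => ?_⟩
  have hyγ := (Real.rpow_pos_of_pos hy γ).le
  have hcy : 0 < c * y := mul_pos hc hy
  have hx : 0 < x := hcy.trans_le hl
  have e1 := Real.mul_rpow hc.le hy.le (z := γ)
  have e2 := Real.mul_rpow hc'.le hy.le (z := γ)
  rcases le_total 0 γ with hγ | hγ
  · have a1 := Real.rpow_le_rpow hcy.le hl hγ
    have a2 := Real.rpow_le_rpow hx.le hu hγ
    rw [e1] at a1
    rw [e2] at a2
    exact ⟨(mul_le_mul_of_nonneg_right (min_le_left _ _) hyγ).trans a1,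
      a2.trans (mul_le_mul_of_nonneg_right (le_max_right _ _) hyγ)⟩
  · have a1 := Real.rpow_le_rpow_of_nonpos hcy hl hγ
    have a2 := Real.rpow_le_rpow_of_nonpos hx hu hγ
    rw [e1] at a1
    rw [e2] at a2
    exact ⟨(mul_le_mul_of_nonneg_right (min_le_right _ _) hyγ).trans a2,
      a1.trans (mul_le_mul_of_nonneg_right (le_max_left _ _) hyγ)⟩

theorem isSymbolOn_abs_rpow {Z : Set (ℝ × ℝ)} (hZ : ∀ p ∈ Z, 0 < nrm2 p) {f : ℝ × ℝ → ℝ}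
    {m : ℕ} {c c' K : ℝ} (γ : ℝ) (hc : 0 < c) (hc' : 0 < c') (hK : 0 ≤ K)
    (hf : ∀ p ∈ Z, ContDiffAt ℝ 1 f p) (hl : ∀ p ∈ Z, c * nrm2 p ^ m ≤ |f p|)
    (hu : ∀ p ∈ Z, |f p| ≤ c' * nrm2 p ^ m)
    (hd : ∀ p ∈ Z, ‖fderiv ℝ f p‖ * nrm2 p ≤ K * nrm2 p ^ m) :
    ∃ K', 0 ≤ K' ∧ IsSymbolOn Z (γ * m) K' fun p => |f p| ^ γ := by
  obtain ⟨k, hk, K₁, hK₁, hcomp⟩ := rpow_comparable hc hc' γ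
  have hpow : ∀ p ∈ Z, (nrm2 p ^ m) ^ γ = nrm2 p ^ (γ * m) := fun p hp => by
    rw [← Real.rpow_natCast, ← Real.rpow_mul (hZ p hp).le, mul_comm]
  have hfpos : ∀ p ∈ Z, 0 < |f p| := fun p hp =>
    (mul_pos hc (pow_pos (hZ p hp) m)).trans_le (hl p hp)
  have hub : ∀ p ∈ Z, |f p| ^ γ ≤ K₁ * nrm2 p ^ (γ * m) := fun p hp => by
    rw [← hpow p hp]
    exact (hcomp _ _ (pow_pos (hZ p hp) m) (hl p hp) (hu p hp)).2
  refine ⟨K₁ + |γ| * K₁ * (K / c), by positivity, fun p hp => ?_, fun p hp => ?_, fun p hp => ?_⟩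
  · have h0 := abs_pos.1 (hfpos p hp)
    exact ((hf p hp).abs h0).rpow_const_of_ne (hfpos p hp).ne'
  · rw [abs_of_nonneg (Real.rpow_nonneg (abs_nonneg _) _)]
    refine (hub p hp).trans (mul_le_mul_of_nonneg_right ?_ (Real.rpow_nonneg (hZ p hp).le _))
    have : 0 ≤ |γ| * K₁ * (K / c) := by positivity
    linarith
  · have h0 := abs_pos.1 (hfpos p hp)
    have hD := (((hf p hp).differentiableAt (by simp)).hasFDerivAt.abs h0).rpow_const
      (p := γ) (Or.inl (hfpos p hp).ne')
    rw [hD.fderiv, norm_smul, norm_smul]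
    have hz := hZ p hp
    have hsign : ‖((SignType.sign (f p) : SignType) : ℝ)‖ = 1 := by
      rcases lt_or_gt_of_ne h0 with h | h <;> simp [h]
    rw [hsign, one_mul, norm_mul, Real.norm_eq_abs, Real.norm_eq_abs,
      abs_of_nonneg (Real.rpow_nonneg (abs_nonneg _) _), Real.rpow_sub_one (hfpos p hp).ne',
      Real.rpow_sub_one hz.ne']
    have hq : ‖fderiv ℝ f p‖ / |f p| ≤ K / c / nrm2 p := by
      rw [div_div, div_le_div_iff₀ (hfpos p hp) (by positivity)]
      calc ‖fderiv ℝ f p‖ * (c * nrm2 p) = c * (‖fderiv ℝ f p‖ * nrm2 p) := by ring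
        _ ≤ c * (K * nrm2 p ^ m) := mul_le_mul_of_nonneg_left (hd p hp) hc.le
        _ = K * (c * nrm2 p ^ m) := by ring
        _ ≤ K * |f p| := by gcongr; exact hl p hp
    calc |γ| * (|f p| ^ γ / |f p|) * ‖fderiv ℝ f p‖
        = |γ| * |f p| ^ γ * (‖fderiv ℝ f p‖ / |f p|) := by ring
      _ ≤ |γ| * (K₁ * nrm2 p ^ (γ * m)) * (K / c / nrm2 p) := by
        have := hub p hp
        have := Real.rpow_nonneg (abs_nonneg (f p)) γ
        gcongr
      _ = |γ| * K₁ * (K / c) * (nrm2 p ^ (γ * m) / nrm2 p) := by ring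
      _ ≤ (K₁ + |γ| * K₁ * (K / c)) * (nrm2 p ^ (γ * m) / nrm2 p) := by
        have := Real.rpow_nonneg hz.le (γ * m)
        gcongr
        linarith

theorem AlphaBound.isSymbolOn {α : ℝ × ℝ → ℝ} {A : ℝ} (h : AlphaBound α A) {Z : Set (ℝ × ℝ)}
    (hZ : ∀ p ∈ Z, 0 < nrm2 p) : IsSymbolOn Z 0 (2 * A) α := by
  have hA : 0 ≤ A := (abs_nonneg _).trans (h.2.1 0)
  have hne : ∀ p ∈ Z, p ≠ 0 := by
    rintro p hp rfl
    exact (hZ 0 hp).ne' nrm2_zero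
  refine ⟨fun p hp => h.1.contDiffAt (isOpen_compl_singleton.mem_nhds (hne p hp)), fun p _ => ?_,
    fun p hp => ?_⟩
  · have := h.2.1 p
    simp only [Real.rpow_zero, mul_one]
    linarith
  · have hg := h.2.2 p (hne p hp)
    have hz := hZ p hp
    rw [zero_sub, Real.rpow_neg_one]
    refine ContinuousLinearMap.opNorm_le_bound _ (by positivity) fun v => ?_
    have e : v = v.1 • ((1 : ℝ), (0 : ℝ)) + v.2 • ((0 : ℝ), (1 : ℝ)) := by
      ext <;> simp
    set T := fderiv ℝ α p
    have hT : ‖(T (1, 0), T (0, 1))‖ ≤ A * (nrm2 p)⁻¹ := (norm_le_nrm2 _).trans hg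
    have h1 := (norm_fst_le (T (1, 0), T (0, 1))).trans hT
    have h2 := (norm_snd_le (T (1, 0), T (0, 1))).trans hT
    have h3 := norm_fst_le v
    have h4 := norm_snd_le v
    have hTv : T v = v.1 * T (1, 0) + v.2 * T (0, 1) := by
      conv_lhs => rw [e]
      rw [map_add, map_smul, map_smul, smul_eq_mul, smul_eq_mul]
    rw [hTv]
    refine (norm_add_le _ _).trans ?_
    rw [norm_mul, norm_mul]
    calc _ ≤ ‖v‖ * (A * (nrm2 p)⁻¹) + ‖v‖ * (A * (nrm2 p)⁻¹) := by gcongr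
      _ = _ := by ring

/-! ### One-dimensional oscillatory integrals -/

theorem norm_integral_mul_deriv_cexp_le {a b : ℝ} (hab : a ≤ b) {q q' ψ ψ' : ℝ → ℝ}
    (hq : ∀ x ∈ Icc a b, HasDerivAt q (q' x) x) (hψ : ∀ x ∈ Icc a b, HasDerivAt ψ (ψ' x) x)
    (hq' : ContinuousOn q' (Icc a b)) (hψ' : ContinuousOn ψ' (Icc a b)) :
    ‖∫ x in a..b, ((q x * ψ' x : ℝ) : ℂ) * Complex.exp (Complex.I * (ψ x : ℝ))‖ ≤
      |q a| + |q b| + ∫ x in a..b, |q' x| := by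
  have hnorm : ∀ x : ℝ, ‖Complex.exp (Complex.I * (ψ x : ℝ))‖ = 1 := fun x => by
    rw [mul_comm]; exact Complex.norm_exp_ofReal_mul_I _
  have hψc : ContinuousOn ψ (Icc a b) := fun x hx => (hψ x hx).continuousAt.continuousWithinAt
  have hcexp : ContinuousOn (fun x => Complex.exp (Complex.I * (ψ x : ℝ))) (Icc a b) := by
    fun_prop
  have hu := uIcc_of_le hab
  have key := intervalIntegral.integral_mul_deriv_eq_deriv_mul (a := a) (b := b)
    (u := fun x => (q x : ℂ)) (u' := fun x => (q' x : ℂ))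
    (v := fun x => Complex.exp (Complex.I * (ψ x : ℝ)))
    (v' := fun x => Complex.exp (Complex.I * (ψ x : ℝ)) * (Complex.I * (ψ' x : ℝ)))
    (by rw [hu]; exact fun x hx => (hq x hx).ofReal_comp)
    (by rw [hu]; exact fun x hx => ((hψ x hx).ofReal_comp.const_mul Complex.I).cexp)
    (by
      apply ContinuousOn.intervalIntegrable
      rw [hu]; fun_prop)
    (by
      apply ContinuousOn.intervalIntegrable
      rw [hu]; fun_prop)
  have e : ∫ x in a..b, ((q x * ψ' x : ℝ) : ℂ) * Complex.exp (Complex.I * (ψ x : ℝ)) =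
      -Complex.I * ∫ x in a..b, (q x : ℂ) *
        (Complex.exp (Complex.I * (ψ x : ℝ)) * (Complex.I * (ψ' x : ℝ))) := by
    rw [← intervalIntegral.integral_const_mul]
    refine intervalIntegral.integral_congr fun x _ => ?_
    push_cast
    linear_combination (q x * ψ' x * Complex.exp (Complex.I * ψ x)) * Complex.I_sq
  rw [e, key, norm_mul, norm_neg, Complex.norm_I, one_mul]
  refine (norm_sub_le _ _).trans (add_le_add ((norm_sub_le _ _).trans ?_) ?_)
  · rw [norm_mul, norm_mul, hnorm, hnorm, mul_one, mul_one, Complex.norm_real, Complex.norm_real,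
      add_comm]
    rfl
  · refine intervalIntegral.norm_integral_le_of_norm_le hab ?_ ?_
    · filter_upwards with x _
      rw [norm_mul, hnorm, mul_one, Complex.norm_real, Real.norm_eq_abs]
    · apply ContinuousOn.intervalIntegrable
      rw [hu]; fun_prop

/-! ### The angular phase -/

/-- The phase `tx + uy` at the point of the unit circle of argument `θ`. -/
noncomputable def angPhase (t u θ : ℝ) : ℝ := t * Real.cos θ + u * Real.sin θ

/-- The derivative of `angPhase` with respect to the angle. -/
noncomputable def angPhase' (t u θ : ℝ) : ℝ := -t * Real.sin θ + u * Real.cos θ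

theorem hasDerivAt_angPhase (t u θ : ℝ) : HasDerivAt (angPhase t u) (angPhase' t u θ) θ := by
  unfold angPhase angPhase'
  have := ((Real.hasDerivAt_cos θ).const_mul t).add ((Real.hasDerivAt_sin θ).const_mul u)
  exact this.congr_deriv (by ring)

theorem hasDerivAt_angPhase' (t u θ : ℝ) : HasDerivAt (angPhase' t u) (-angPhase t u θ) θ := by
  unfold angPhase angPhase'
  have := ((Real.hasDerivAt_sin θ).const_mul (-t)).add ((Real.hasDerivAt_cos θ).const_mul u)
  exact this.congr_deriv (by ring)

theorem continuous_angPhase (t u : ℝ) : Continuous (angPhase t u) := by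
  unfold angPhase; fun_prop

theorem continuous_angPhase' (t u : ℝ) : Continuous (angPhase' t u) := by
  unfold angPhase'; fun_prop

theorem angPhase_sq_add_sq (t u θ : ℝ) :
    angPhase t u θ ^ 2 + angPhase' t u θ ^ 2 = nrm2 (t, u) ^ 2 := by
  have h : nrm2 (t, u) ^ 2 = t ^ 2 + u ^ 2 := Real.sq_sqrt (by positivity)
  rw [h]
  unfold angPhase angPhase'
  linear_combination (t ^ 2 + u ^ 2) * Real.sin_sq_add_cos_sq θ

theorem abs_angPhase_le (t u θ : ℝ) : |angPhase t u θ| ≤ nrm2 (t, u) := by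
  refine abs_le_of_sq_le_sq ?_ (Real.sqrt_nonneg _)
  nlinarith [angPhase_sq_add_sq t u θ, sq_nonneg (angPhase' t u θ)]

theorem abs_angPhase'_le (t u θ : ℝ) : |angPhase' t u θ| ≤ nrm2 (t, u) := by
  refine abs_le_of_sq_le_sq ?_ (Real.sqrt_nonneg _)
  nlinarith [angPhase_sq_add_sq t u θ, sq_nonneg (angPhase t u θ)]

theorem abs_angPhase_sub_le (t u x y : ℝ) :
    |angPhase t u y - angPhase t u x| ≤ nrm2 (t, u) * |y - x| :=
  convex_univ.norm_image_sub_le_of_norm_hasDerivWithin_le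
    (fun z _ => (hasDerivAt_angPhase t u z).hasDerivWithinAt) (fun z _ => abs_angPhase'_le t u z)
    (mem_univ x) (mem_univ y)

theorem abs_angPhase'_sub_le (t u x y : ℝ) :
    |angPhase' t u y - angPhase' t u x| ≤ nrm2 (t, u) * |y - x| :=
  convex_univ.norm_image_sub_le_of_norm_hasDerivWithin_le
    (fun z _ => (hasDerivAt_angPhase' t u z).hasDerivWithinAt)
    (fun z _ => by rw [norm_neg]; exact abs_angPhase_le t u z)
    (mem_univ x) (mem_univ y)

/-- On a short arc, the radial or the angular derivative of the phase is large. -/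
theorem angPhase_dichotomy (t u : ℝ) {a b : ℝ} (hab : b - a ≤ Real.pi / 8) :
    (∀ θ ∈ Icc a b, nrm2 (t, u) / 2 ≤ |angPhase t u θ|) ∨
      (∀ θ ∈ Icc a b, nrm2 (t, u) / 2 ≤ |angPhase' t u θ|) := by
  set M := nrm2 (t, u)
  have hM : 0 ≤ M := Real.sqrt_nonneg _
  set m := (a + b) / 2
  have hdist : ∀ θ ∈ Icc a b, M * |m - θ| ≤ M * (1 / 5) := by
    intro θ hθ
    refine mul_le_mul_of_nonneg_left ?_ hM
    have hpi := Real.pi_lt_d2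
    rw [abs_le]
    constructor <;> simp only [m] <;> linarith [hθ.1, hθ.2]
  have hsq := angPhase_sq_add_sq t u m
  have hor : 7 / 10 * M ≤ |angPhase t u m| ∨ 7 / 10 * M ≤ |angPhase' t u m| := by
    by_contra! hc
    have h1 : angPhase t u m ^ 2 ≤ (7 / 10 * M) ^ 2 := by
      rw [← sq_abs]; gcongr; exact hc.1.le
    have h2 : angPhase' t u m ^ 2 ≤ (7 / 10 * M) ^ 2 := by
      rw [← sq_abs]; gcongr; exact hc.2.le
    have h3 : 0 < M := by
      by_contra! h
      have : M = 0 := le_antisymm h hM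
      rw [this] at hc
      linarith [hc.1, abs_nonneg (angPhase t u m)]
    have : M ^ 2 ≤ 2 * (7 / 10 * M) ^ 2 := by rw [← hsq]; linarith
    nlinarith
  rcases hor with h | h
  · left
    intro θ hθ
    have h1 := (abs_angPhase_sub_le t u θ m).trans (hdist θ hθ)
    have h2 := abs_sub_abs_le_abs_sub (angPhase t u m) (angPhase t u θ)
    linarith
  · right
    intro θ hθ
    have h1 := (abs_angPhase'_sub_le t u θ m).trans (hdist θ hθ)
    have h2 := abs_sub_abs_le_abs_sub (angPhase' t u m) (angPhase' t u θ)
    linarith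

/-! ### Oscillatory integrals of symbols over a sector -/

/-- The closed sector `0 < ρ ≤ r`, `θ₁ ≤ θ ≤ θ₂`, without its vertex. -/
def closedSector (r θ₁ θ₂ : ℝ) : Set (ℝ × ℝ) := polarPt '' (Ioc 0 r ×ˢ Icc θ₁ θ₂)

theorem closedSector_nrm2_pos {r θ₁ θ₂ : ℝ} : ∀ p ∈ closedSector r θ₁ θ₂, 0 < nrm2 p := by
  rintro _ ⟨q, hq, rfl⟩
  rw [nrm2_polarPt hq.1.1.le]
  exact hq.1.1

/-- The integrand of the oscillatory integral of `G` in polar coordinates. -/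
noncomputable def polarIntegrand (G : ℝ × ℝ → ℝ) (t u : ℝ) (q : ℝ × ℝ) : ℂ :=
  ((q.1 * G (polarPt q) : ℝ) : ℂ) * Complex.exp (Complex.I * ((q.1 * angPhase t u q.2 : ℝ) : ℂ))

theorem norm_polarIntegrand (G : ℝ × ℝ → ℝ) (t u : ℝ) (q : ℝ × ℝ) :
    ‖polarIntegrand G t u q‖ = |q.1 * G (polarPt q)| := by
  rw [polarIntegrand, norm_mul, mul_comm Complex.I, Complex.norm_exp_ofReal_mul_I, mul_one,
    Complex.norm_real, Real.norm_eq_abs]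

section Sector

variable {r θ₁ θ₂ ε K : ℝ} {G : ℝ × ℝ → ℝ}

theorem IsSymbolOn.abs_polar_le (hG : IsSymbolOn (closedSector r θ₁ θ₂) (ε - 2) K G)
    {ρ θ : ℝ} (hρ : ρ ∈ Ioc 0 r) (hθ : θ ∈ Icc θ₁ θ₂) :
    |G (polarPt (ρ, θ))| ≤ K * ρ ^ (ε - 2) := by
  have h := hG.abs_le _ (mem_image_of_mem polarPt (mk_mem_prod hρ hθ))
  rwa [nrm2_polarPt hρ.1.le] at h

theorem IsSymbolOn.abs_fderiv_polar_le (hG : IsSymbolOn (closedSector r θ₁ θ₂) (ε - 2) K G)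
    {ρ θ : ℝ} (hρ : ρ ∈ Ioc 0 r) (hθ : θ ∈ Icc θ₁ θ₂) :
    ‖fderiv ℝ G (polarPt (ρ, θ))‖ * ρ ≤ K * ρ ^ (ε - 2) := by
  have h := hG.fderiv_le _ (mem_image_of_mem polarPt (mk_mem_prod hρ hθ))
  rw [nrm2_polarPt hρ.1.le, Real.rpow_sub_one hρ.1.ne'] at h
  calc _ ≤ K * (ρ ^ (ε - 2) / ρ) * ρ := mul_le_mul_of_nonneg_right h hρ.1.le
    _ = _ := by
      have := hρ.1.ne'
      field_simp

theorem IsSymbolOn.hasFDerivAt (hG : IsSymbolOn (closedSector r θ₁ θ₂) (ε - 2) K G)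
    {ρ θ : ℝ} (hρ : ρ ∈ Ioc 0 r) (hθ : θ ∈ Icc θ₁ θ₂) :
    HasFDerivAt G (fderiv ℝ G (polarPt (ρ, θ))) (polarPt (ρ, θ)) :=
  ((hG.contDiffAt _ (mem_image_of_mem polarPt (mk_mem_prod hρ hθ))).differentiableAt
    (by simp)).hasFDerivAt

theorem IsSymbolOn.continuousOn_polar (hG : IsSymbolOn (closedSector r θ₁ θ₂) (ε - 2) K G) :
    ContinuousOn (fun q => G (polarPt q)) (Ioc 0 r ×ˢ Icc θ₁ θ₂) := fun _ hq =>
  ((hG.contDiffAt _ (mem_image_of_mem polarPt hq)).continuousAt.comp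
    continuous_polarPt.continuousAt).continuousWithinAt

theorem IsSymbolOn.continuousOn_fderiv_polar
    (hG : IsSymbolOn (closedSector r θ₁ θ₂) (ε - 2) K G) :
    ContinuousOn (fun q => fderiv ℝ G (polarPt q)) (Ioc 0 r ×ˢ Icc θ₁ θ₂) := fun _ hq =>
  (ContinuousAt.comp (f := polarPt)
    ((hG.contDiffAt _ (mem_image_of_mem polarPt hq)).continuousAt_fderiv (by simp))
    continuous_polarPt.continuousAt).continuousWithinAt

theorem IsSymbolOn.continuousOn_polarIntegrand
    (hG : IsSymbolOn (closedSector r θ₁ θ₂) (ε - 2) K G) (t u : ℝ) :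
    ContinuousOn (polarIntegrand G t u) (Ioc 0 r ×ˢ Icc θ₁ θ₂) := by
  have h1 := hG.continuousOn_polar
  have h2 := continuous_angPhase t u
  refine (Complex.continuous_ofReal.comp_continuousOn (continuousOn_fst.mul h1)).mul ?_
  refine Continuous.continuousOn (Complex.continuous_exp.comp (continuous_const.mul ?_))
  exact Complex.continuous_ofReal.comp (continuous_fst.mul (h2.comp continuous_snd))

theorem norm_cos_sin_le (θ : ℝ) : ‖((Real.cos θ, Real.sin θ) : ℝ × ℝ)‖ ≤ 1 :=
  max_le (Real.abs_cos_le_one θ) (Real.abs_sin_le_one θ)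

theorem norm_neg_sin_cos_le (θ : ℝ) : ‖((-Real.sin θ, Real.cos θ) : ℝ × ℝ)‖ ≤ 1 :=
  max_le (by rw [norm_neg]; exact Real.abs_sin_le_one θ) (Real.abs_cos_le_one θ)

/-- The radial integral decays when the radial phase derivative is large. -/
theorem IsSymbolOn.norm_radial_integral_le
    (hG : IsSymbolOn (closedSector r θ₁ θ₂) (ε - 2) K G) {δ : ℝ} (hδ : 0 < δ) (hδr : δ ≤ r)
    {t u : ℝ} (hM : 0 < nrm2 (t, u)) {θ : ℝ} (hθ : θ ∈ Icc θ₁ θ₂)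
    (hw : nrm2 (t, u) / 2 ≤ |angPhase t u θ|) :
    ‖∫ ρ in δ..r, polarIntegrand G t u (ρ, θ)‖ ≤
      K / nrm2 (t, u) * (4 * (r ^ (ε - 1) + δ ^ (ε - 1) + ∫ ρ in δ..r, ρ ^ (ε - 2))) := by
  set M := nrm2 (t, u)
  set w := angPhase t u θ
  have hw0 : 0 < |w| := (half_pos hM).trans_le hw
  have hwinv : |w|⁻¹ ≤ 2 / M := by
    rw [inv_le_comm₀ hw0 (by positivity), inv_div]; exact hw
  have hmem : ∀ ρ ∈ Icc δ r, ρ ∈ Ioc 0 r := fun ρ h => ⟨hδ.trans_le h.1, h.2⟩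
  set v : ℝ × ℝ := (Real.cos θ, Real.sin θ)
  have hcurve : ∀ ρ : ℝ, HasDerivAt (fun x : ℝ => polarPt (x, θ)) v ρ := fun ρ => by
    have h1 := ((hasDerivAt_id ρ).mul_const (Real.cos θ)).prodMk
      ((hasDerivAt_id ρ).mul_const (Real.sin θ))
    simpa [polarPt, v] using h1
  have hK : 0 ≤ K * r ^ (ε - 2) :=
    (abs_nonneg _).trans (hG.abs_polar_le (hmem r ⟨hδr, le_rfl⟩) hθ)
  have hpow : ∀ ρ ∈ Icc δ r, ρ * ρ ^ (ε - 2) = ρ ^ (ε - 1) := fun ρ hρ => by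
    have := (hmem ρ hρ).1
    rw [show ε - 1 = 1 + (ε - 2) by ring, Real.rpow_add this, Real.rpow_one]
  have hsub : ContinuousOn (fun ρ : ℝ => ((ρ, θ) : ℝ × ℝ)) (Icc δ r) := by fun_prop
  have hmaps : MapsTo (fun ρ : ℝ => ((ρ, θ) : ℝ × ℝ)) (Icc δ r) (Ioc 0 r ×ˢ Icc θ₁ θ₂) :=
    fun ρ hρ => ⟨hmem ρ hρ, hθ⟩
  have hc1 : ContinuousOn (fun ρ => G (polarPt (ρ, θ))) (Icc δ r) :=
    hG.continuousOn_polar.comp hsub hmaps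
  have hc2 : ContinuousOn (fun ρ => fderiv ℝ G (polarPt (ρ, θ))) (Icc δ r) :=
    hG.continuousOn_fderiv_polar.comp hsub hmaps
  have hq' : ContinuousOn
      (fun ρ => (G (polarPt (ρ, θ)) + ρ * fderiv ℝ G (polarPt (ρ, θ)) v) / w) (Icc δ r) :=
    ContinuousOn.div_const
      (hc1.add (continuousOn_id.mul (hc2.clm_apply continuousOn_const))) _
  have key := norm_integral_mul_deriv_cexp_le hδr
    (q := fun ρ => ρ * G (polarPt (ρ, θ)) / w)
    (q' := fun ρ => (G (polarPt (ρ, θ)) + ρ * fderiv ℝ G (polarPt (ρ, θ)) v) / w)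
    (ψ := fun ρ => ρ * w) (ψ' := fun _ => w)
    (fun ρ hρ => by
      have h1 := (hG.hasFDerivAt (hmem ρ hρ) hθ).comp_hasDerivAt ρ (hcurve ρ)
      have h2 := ((hasDerivAt_id ρ).mul h1).div_const w
      exact h2.congr_deriv (by simp))
    (fun ρ _ => by simpa using (hasDerivAt_id ρ).mul_const w)
    hq' continuousOn_const
  have hend : ∀ ρ ∈ Icc δ r, |ρ * G (polarPt (ρ, θ)) / w| ≤ K / M * (2 * ρ ^ (ε - 1)) := by
    intro ρ hρ
    have hρ0 := (hmem ρ hρ).1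
    have hb := hG.abs_polar_le (hmem ρ hρ) hθ
    rw [abs_div, abs_mul, abs_of_pos hρ0, div_eq_mul_inv]
    calc ρ * |G (polarPt (ρ, θ))| * |w|⁻¹ ≤ ρ * (K * ρ ^ (ε - 2)) * (2 / M) := by
          have := (abs_nonneg _).trans hb
          gcongr
      _ = K / M * (2 * (ρ * ρ ^ (ε - 2))) := by ring
      _ = _ := by rw [hpow ρ hρ]
  have hint : IntervalIntegrable (fun ρ : ℝ => ρ ^ (ε - 2)) volume δ r :=
    intervalIntegral.intervalIntegrable_rpow (Or.inr (by
      rw [uIcc_of_le hδr]; exact fun h => hδ.not_ge h.1))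
  have hD : ∫ ρ in δ..r, |(G (polarPt (ρ, θ)) + ρ * fderiv ℝ G (polarPt (ρ, θ)) v) / w| ≤
      K / M * (4 * ∫ ρ in δ..r, ρ ^ (ε - 2)) := by
    rw [← mul_assoc, ← intervalIntegral.integral_const_mul]
    refine intervalIntegral.integral_mono_on hδr ?_ (hint.const_mul _) fun ρ hρ => ?_
    · apply ContinuousOn.intervalIntegrable
      rw [uIcc_of_le hδr]
      exact hq'.abs
    · have hρ0 := (hmem ρ hρ).1
      have hb := hG.abs_polar_le (hmem ρ hρ) hθ
      have hb2 := hG.abs_fderiv_polar_le (hmem ρ hρ) hθ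
      have hv : |fderiv ℝ G (polarPt (ρ, θ)) v| ≤ ‖fderiv ℝ G (polarPt (ρ, θ))‖ :=
        ((fderiv ℝ G (polarPt (ρ, θ))).le_opNorm v).trans
          (mul_le_of_le_one_right (norm_nonneg (fderiv ℝ G (polarPt (ρ, θ)))) (norm_cos_sin_le θ))
      have hsum : |G (polarPt (ρ, θ)) + ρ * fderiv ℝ G (polarPt (ρ, θ)) v| ≤
          2 * (K * ρ ^ (ε - 2)) := by
        refine (abs_add_le _ _).trans ?_
        rw [abs_mul, abs_of_pos hρ0]
        have := mul_le_mul_of_nonneg_left hv hρ0.le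
        linarith
      rw [abs_div, div_eq_mul_inv]
      calc _ ≤ 2 * (K * ρ ^ (ε - 2)) * (2 / M) := by
            have := (abs_nonneg _).trans hsum
            gcongr
        _ = _ := by ring
  have e : ∫ ρ in δ..r, polarIntegrand G t u (ρ, θ) =
      ∫ ρ in δ..r, ((ρ * G (polarPt (ρ, θ)) / w * w : ℝ) : ℂ) *
        Complex.exp (Complex.I * ((ρ * w : ℝ) : ℂ)) := by
    refine intervalIntegral.integral_congr fun ρ _ => ?_
    simp only [polarIntegrand]
    rw [div_mul_cancel₀ _ (abs_pos.1 hw0)]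
  rw [e]
  refine key.trans ?_
  have h1 := hend δ ⟨le_rfl, hδr⟩
  have h2 := hend r ⟨hδr, le_rfl⟩
  have hKM : 0 ≤ K / M := by
    have : 0 ≤ K := nonneg_of_mul_nonneg_left hK (Real.rpow_pos_of_pos (hδ.trans_le hδr) _)
    positivity
  have h3 : 0 ≤ K / M * (2 * δ ^ (ε - 1)) := by positivity
  have h4 : 0 ≤ K / M * (2 * r ^ (ε - 1)) := by
    have := hδ.trans_le hδr
    positivity
  linarith

/-- The angular integral decays when the angular phase derivative is large. -/
theorem IsSymbolOn.norm_angular_integral_le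
    (hG : IsSymbolOn (closedSector r θ₁ θ₂) (ε - 2) K G) {t u : ℝ} (hM : 0 < nrm2 (t, u))
    {ρ : ℝ} (hρ : ρ ∈ Ioc 0 r) {a b : ℝ} (hab : a ≤ b) (hba : b - a ≤ 1) (ha : θ₁ ≤ a)
    (hb : b ≤ θ₂) (hw : ∀ θ ∈ Icc a b, nrm2 (t, u) / 2 ≤ |angPhase' t u θ|) :
    ‖∫ θ in a..b, polarIntegrand G t u (ρ, θ)‖ ≤ K / nrm2 (t, u) * (10 * ρ ^ (ε - 2)) := by
  set M := nrm2 (t, u)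
  set w := angPhase t u
  set w' := angPhase' t u
  have hw0 : ∀ θ ∈ Icc a b, 0 < |w' θ| := fun θ hθ => (half_pos hM).trans_le (hw θ hθ)
  have hwinv : ∀ θ ∈ Icc a b, |w' θ|⁻¹ ≤ 2 / M := fun θ hθ => by
    rw [inv_le_comm₀ (hw0 θ hθ) (by positivity), inv_div]; exact hw θ hθ
  have hmem : ∀ θ ∈ Icc a b, θ ∈ Icc θ₁ θ₂ := fun θ h => ⟨ha.trans h.1, h.2.trans hb⟩
  have hcurve : ∀ θ : ℝ, HasDerivAt (fun x : ℝ => polarPt (ρ, x))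
      (ρ • ((-Real.sin θ, Real.cos θ) : ℝ × ℝ)) θ := fun θ => by
    have h1 := ((Real.hasDerivAt_cos θ).const_mul ρ).prodMk
      ((Real.hasDerivAt_sin θ).const_mul ρ)
    simpa [polarPt] using h1
  have hsub : ContinuousOn (fun θ : ℝ => ((ρ, θ) : ℝ × ℝ)) (Icc a b) := by fun_prop
  have hmaps : MapsTo (fun θ : ℝ => ((ρ, θ) : ℝ × ℝ)) (Icc a b) (Ioc 0 r ×ˢ Icc θ₁ θ₂) :=
    fun θ hθ => ⟨hρ, hmem θ hθ⟩
  have hc1 : ContinuousOn (fun θ => G (polarPt (ρ, θ))) (Icc a b) :=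
    hG.continuousOn_polar.comp hsub hmaps
  have hc2 : ContinuousOn (fun θ => fderiv ℝ G (polarPt (ρ, θ))) (Icc a b) :=
    hG.continuousOn_fderiv_polar.comp hsub hmaps
  have hcw : Continuous w := continuous_angPhase t u
  have hcw' : Continuous w' := continuous_angPhase' t u
  set D : ℝ → ℝ := fun θ =>
    fderiv ℝ G (polarPt (ρ, θ)) (ρ • ((-Real.sin θ, Real.cos θ) : ℝ × ℝ)) with hDdef
  have hcD : ContinuousOn D (Icc a b) :=
    hc2.clm_apply (by fun_prop)
  set q' : ℝ → ℝ := fun θ => (D θ * w' θ - G (polarPt (ρ, θ)) * (-w θ)) / w' θ ^ 2 with hq'def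
  have hq' : ContinuousOn q' (Icc a b) := by
    refine ContinuousOn.div ((hcD.mul hcw'.continuousOn).sub
      (hc1.mul hcw.neg.continuousOn)) (hcw'.pow 2).continuousOn fun θ hθ => ?_
    exact pow_ne_zero 2 (abs_pos.1 (hw0 θ hθ))
  have key := norm_integral_mul_deriv_cexp_le hab
    (q := fun θ => G (polarPt (ρ, θ)) / w' θ) (q' := q')
    (ψ := fun θ => ρ * w θ) (ψ' := fun θ => ρ * w' θ)
    (fun θ hθ => by
      have h1 := (hG.hasFDerivAt hρ (hmem θ hθ)).comp_hasDerivAt θ (hcurve θ)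
      exact h1.div (hasDerivAt_angPhase' t u θ) (abs_pos.1 (hw0 θ hθ)))
    (fun θ _ => (hasDerivAt_angPhase t u θ).const_mul ρ)
    hq' (by fun_prop)
  have hend : ∀ θ ∈ Icc a b, |G (polarPt (ρ, θ)) / w' θ| ≤ K / M * (2 * ρ ^ (ε - 2)) := by
    intro θ hθ
    have hb := hG.abs_polar_le hρ (hmem θ hθ)
    rw [abs_div, div_eq_mul_inv]
    calc _ ≤ K * ρ ^ (ε - 2) * (2 / M) := by
          have := (abs_nonneg _).trans hb
          have := hwinv θ hθ
          gcongr
      _ = _ := by ring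
  have hqb : ∀ θ ∈ Icc a b, |q' θ| ≤ K / M * (6 * ρ ^ (ε - 2)) := by
    intro θ hθ
    have hb := hG.abs_polar_le hρ (hmem θ hθ)
    have hb0 := (abs_nonneg _).trans hb
    have hb2 := hG.abs_fderiv_polar_le hρ (hmem θ hθ)
    have hDb : |D θ| ≤ K * ρ ^ (ε - 2) := by
      refine le_trans ?_ hb2
      refine ((fderiv ℝ G (polarPt (ρ, θ))).le_opNorm _).trans
        (mul_le_mul_of_nonneg_left ?_ (norm_nonneg (fderiv ℝ G (polarPt (ρ, θ)))))
      rw [norm_smul, Real.norm_eq_abs, abs_of_pos hρ.1]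
      exact mul_le_of_le_one_right hρ.1.le (norm_neg_sin_cos_le θ)
    have hwb : |w θ| ≤ M := abs_angPhase_le t u θ
    have hi := hwinv θ hθ
    have hne := abs_pos.1 (hw0 θ hθ)
    have e : q' θ = D θ * (w' θ)⁻¹ + G (polarPt (ρ, θ)) * w θ * ((w' θ)⁻¹ * (w' θ)⁻¹) := by
      simp only [hq'def]
      field_simp
      ring
    rw [e]
    refine (abs_add_le _ _).trans ?_
    rw [abs_mul, abs_mul, abs_mul, abs_mul, abs_inv]
    calc _ ≤ K * ρ ^ (ε - 2) * (2 / M) + K * ρ ^ (ε - 2) * M * (2 / M * (2 / M)) := by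
          gcongr
      _ = _ := by
          field_simp
          ring
  have hint : ∫ θ in a..b, |q' θ| ≤ K / M * (6 * ρ ^ (ε - 2)) := by
    have h1 : ∫ θ in a..b, |q' θ| ≤ ∫ θ in a..b, K / M * (6 * ρ ^ (ε - 2)) := by
      refine intervalIntegral.integral_mono_on hab ?_ (by simp) hqb
      apply ContinuousOn.intervalIntegrable
      rw [uIcc_of_le hab]
      exact hq'.abs
    rw [intervalIntegral.integral_const, smul_eq_mul] at h1
    have h2 := (abs_nonneg _).trans (hqb a ⟨le_rfl, hab⟩)
    exact h1.trans (mul_le_of_le_one_left h2 hba)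
  have e : ∫ θ in a..b, polarIntegrand G t u (ρ, θ) =
      ∫ θ in a..b, ((G (polarPt (ρ, θ)) / w' θ * (ρ * w' θ) : ℝ) : ℂ) *
        Complex.exp (Complex.I * ((ρ * w θ : ℝ) : ℂ)) := by
    refine intervalIntegral.integral_congr fun θ hθ => ?_
    rw [uIcc_of_le hab] at hθ
    have hne := abs_pos.1 (hw0 θ hθ)
    simp only [polarIntegrand]
    congr 2
    field_simp
  rw [e]
  refine key.trans ?_
  have h1 := hend a ⟨le_rfl, hab⟩
  have h2 := hend b ⟨hab, le_rfl⟩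
  linarith

theorem IsSymbolOn.integrableOn_polarIntegrand_Icc
    (hG : IsSymbolOn (closedSector r θ₁ θ₂) (ε - 2) K G) {δ : ℝ} (hδ : 0 < δ) (t u : ℝ) :
    IntegrableOn (polarIntegrand G t u) (Icc δ r ×ˢ Icc θ₁ θ₂) :=
  ((hG.continuousOn_polarIntegrand t u).mono
    (prod_mono (fun _ h => ⟨hδ.trans_le h.1, h.2⟩) subset_rfl)).integrableOn_compact
    (isCompact_Icc.prod isCompact_Icc)

theorem IsSymbolOn.norm_arc_integral_le
    (hG : IsSymbolOn (closedSector r θ₁ θ₂) (ε - 2) K G) {δ : ℝ} (hδ : 0 < δ) (hδr : δ ≤ r)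
    {t u : ℝ} (hM : 0 < nrm2 (t, u)) {a b : ℝ} (hab : a ≤ b) (hba : b - a ≤ Real.pi / 8)
    (ha : θ₁ ≤ a) (hb : b ≤ θ₂) :
    ‖∫ θ in a..b, ∫ ρ in δ..r, polarIntegrand G t u (ρ, θ)‖ ≤
      K / nrm2 (t, u) * (10 * (r ^ (ε - 1) + δ ^ (ε - 1) + ∫ ρ in δ..r, ρ ^ (ε - 2))) := by
  have hr : 0 < r := hδ.trans_le hδr
  have hpi : Real.pi / 8 ≤ 1 := by linarith [Real.pi_lt_d2]
  have hK : 0 ≤ K := by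
    have := (abs_nonneg _).trans (hG.abs_polar_le ⟨hr, le_rfl⟩ (θ := a) ⟨ha, hab.trans hb⟩)
    exact nonneg_of_mul_nonneg_left this (Real.rpow_pos_of_pos hr _)
  have hint : IntervalIntegrable (fun ρ : ℝ => ρ ^ (ε - 2)) volume δ r :=
    intervalIntegral.intervalIntegrable_rpow (Or.inr (by
      rw [uIcc_of_le hδr]; exact fun h => hδ.not_ge h.1))
  have hQ : 0 ≤ ∫ ρ in δ..r, ρ ^ (ε - 2) :=
    intervalIntegral.integral_nonneg hδr fun ρ h => Real.rpow_nonneg (hδ.le.trans h.1) _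
  have hKM : 0 ≤ K / nrm2 (t, u) := by positivity
  have h1 : 0 ≤ r ^ (ε - 1) := by positivity
  have h2 : 0 ≤ δ ^ (ε - 1) := by positivity
  rcases angPhase_dichotomy t u hba with h | h
  · have hle : ∀ θ ∈ uIoc a b, ‖∫ ρ in δ..r, polarIntegrand G t u (ρ, θ)‖ ≤
        K / nrm2 (t, u) * (4 * (r ^ (ε - 1) + δ ^ (ε - 1) + ∫ ρ in δ..r, ρ ^ (ε - 2))) := by
      intro θ hθ
      rw [uIoc_of_le hab] at hθ
      exact hG.norm_radial_integral_le hδ hδr hM ⟨ha.trans hθ.1.le, hθ.2.trans hb⟩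
        (h θ ⟨hθ.1.le, hθ.2⟩)
    refine (intervalIntegral.norm_integral_le_of_norm_le_const hle).trans ?_
    rw [abs_of_nonneg (sub_nonneg.2 hab)]
    refine (mul_le_of_le_one_right (by positivity) (hba.trans hpi)).trans ?_
    gcongr
    norm_num
  · have hswap : ∫ θ in a..b, ∫ ρ in δ..r, polarIntegrand G t u (ρ, θ) =
        ∫ ρ in δ..r, ∫ θ in a..b, polarIntegrand G t u (ρ, θ) := by
      simp only [intervalIntegral.integral_of_le hab, intervalIntegral.integral_of_le hδr]
      refine (integral_integral_swap (f := fun ρ θ => polarIntegrand G t u (ρ, θ)) ?_).symm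
      rw [Measure.prod_restrict]
      exact (hG.integrableOn_polarIntegrand_Icc hδ t u).mono_set
        (prod_mono Ioc_subset_Icc_self fun θ h => ⟨ha.trans h.1.le, h.2.trans hb⟩)
    rw [hswap]
    refine (intervalIntegral.norm_integral_le_of_norm_le hδr
      (g := fun ρ => K / nrm2 (t, u) * (10 * ρ ^ (ε - 2))) ?_
      ((hint.const_mul _).const_mul _)).trans ?_
    · filter_upwards with ρ hρ
      exact hG.norm_angular_integral_le hM ⟨hδ.trans hρ.1, hρ.2⟩ hab (hba.trans hpi) ha hb h
    · rw [intervalIntegral.integral_const_mul, intervalIntegral.integral_const_mul]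
      gcongr
      linarith

theorem IsSymbolOn.norm_outer_integral_le
    (hG : IsSymbolOn (closedSector r θ₁ θ₂) (ε - 2) K G) {δ : ℝ} (hδ : 0 < δ) (hδr : δ ≤ r)
    (h12 : θ₁ ≤ θ₂) (h21 : θ₂ ≤ θ₁ + 2 * Real.pi) {t u : ℝ} (hM : 0 < nrm2 (t, u)) :
    ‖∫ q in Ioc δ r ×ˢ Ioc θ₁ θ₂, polarIntegrand G t u q‖ ≤
      K / nrm2 (t, u) * (160 * (r ^ (ε - 1) + δ ^ (ε - 1) + ∫ ρ in δ..r, ρ ^ (ε - 2))) := by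
  have hI : Integrable (polarIntegrand G t u)
      ((volume.restrict (Ioc δ r)).prod (volume.restrict (Ioc θ₁ θ₂))) := by
    rw [Measure.prod_restrict]
    exact (hG.integrableOn_polarIntegrand_Icc hδ t u).mono_set
      (prod_mono Ioc_subset_Icc_self Ioc_subset_Icc_self)
  have e : ∫ q in Ioc δ r ×ˢ Ioc θ₁ θ₂, polarIntegrand G t u q =
      ∫ θ in θ₁..θ₂, ∫ ρ in δ..r, polarIntegrand G t u (ρ, θ) := by
    rw [Measure.volume_eq_prod, ← Measure.prod_restrict, integral_prod_symm _ hI,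
      intervalIntegral.integral_of_le h12]
    simp only [intervalIntegral.integral_of_le hδr]
  have hint : IntervalIntegrable (fun θ => ∫ ρ in δ..r, polarIntegrand G t u (ρ, θ))
      volume θ₁ θ₂ := by
    rw [intervalIntegrable_iff_integrableOn_Ioc_of_le h12]
    simp only [intervalIntegral.integral_of_le hδr]
    exact hI.integral_prod_right
  set c : ℕ → ℝ := fun k => θ₁ + k * ((θ₂ - θ₁) / 16) with hc
  have hstep : 0 ≤ (θ₂ - θ₁) / 16 := by linarith
  have hmono : Monotone c := fun i j hij => by
    simp only [hc]
    gcongr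
  have hc0 : c 0 = θ₁ := by simp [hc]
  have hc16 : c 16 = θ₂ := by simp only [hc]; push_cast; ring
  have hlow : ∀ k, θ₁ ≤ c k := fun k => hc0 ▸ hmono (Nat.zero_le k)
  have hupp : ∀ k < 16, c (k + 1) ≤ θ₂ := fun k hk => hc16 ▸ hmono hk
  have hsum := intervalIntegral.sum_integral_adjacent_intervals (μ := volume) (a := c) (n := 16)
    (f := fun θ => ∫ ρ in δ..r, polarIntegrand G t u (ρ, θ)) (fun k hk => by
      refine hint.mono_set ?_
      rw [uIcc_of_le (hmono (Nat.le_succ k)), uIcc_of_le h12]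
      exact Icc_subset_Icc (hlow k) (hupp k hk))
  rw [hc0, hc16] at hsum
  rw [e, ← hsum]
  refine (norm_sum_le_of_le _ fun k hk => ?_).trans (le_of_eq ?_) (b := ∑ _k ∈ Finset.range 16,
    K / nrm2 (t, u) * (10 * (r ^ (ε - 1) + δ ^ (ε - 1) + ∫ ρ in δ..r, ρ ^ (ε - 2))))
  · refine hG.norm_arc_integral_le hδ hδr hM (hmono (Nat.le_succ k)) ?_ (hlow k)
      (hupp k (Finset.mem_range.1 hk))
    simp only [hc]
    push_cast
    linarith
  · rw [Finset.sum_const, Finset.card_range, nsmul_eq_mul]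
    push_cast
    ring

theorem IsSymbolOn.norm_polarIntegrand_le
    (hG : IsSymbolOn (closedSector r θ₁ θ₂) (ε - 2) K G) (t u : ℝ) {q : ℝ × ℝ}
    (hq : q ∈ Ioc 0 r ×ˢ Icc θ₁ θ₂) : ‖polarIntegrand G t u q‖ ≤ K * q.1 ^ (ε - 1) := by
  have h0 : 0 < q.1 := hq.1.1
  rw [norm_polarIntegrand, abs_mul, abs_of_pos h0]
  refine (mul_le_mul_of_nonneg_left (hG.abs_polar_le hq.1 hq.2) h0.le).trans (le_of_eq ?_)
  rw [show ε - 1 = 1 + (ε - 2) by ring, Real.rpow_add h0, Real.rpow_one]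
  ring

theorem integrableOn_rpow_prod (hε : 0 < ε) (K : ℝ) {δ : ℝ} (hδ : 0 ≤ δ) (θ₁ θ₂ : ℝ) :
    IntegrableOn (fun q : ℝ × ℝ => K * q.1 ^ (ε - 1)) (Ioc 0 δ ×ˢ Ioc θ₁ θ₂) := by
  have h1 : IntegrableOn (fun x : ℝ => x ^ (ε - 1)) (Ioc 0 δ) := by
    rw [← intervalIntegrable_iff_integrableOn_Ioc_of_le hδ]
    exact intervalIntegral.intervalIntegrable_rpow' (by linarith)
  have h2 : IntegrableOn (fun _ : ℝ => (1 : ℝ)) (Ioc θ₁ θ₂) := by simp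
  have h3 := (Integrable.mul_prod h1 h2).const_mul K
  rw [Measure.prod_restrict] at h3
  simpa [IntegrableOn, Measure.volume_eq_prod] using h3

theorem IsSymbolOn.integrableOn_polarIntegrand
    (hG : IsSymbolOn (closedSector r θ₁ θ₂) (ε - 2) K G) (hε : 0 < ε) (hr : 0 ≤ r) (t u : ℝ) :
    IntegrableOn (polarIntegrand G t u) (Ioc 0 r ×ˢ Ioc θ₁ θ₂) := by
  have hm : MeasurableSet (Ioc (0 : ℝ) r ×ˢ Ioc θ₁ θ₂) := measurableSet_Ioc.prod measurableSet_Ioc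
  have hsub : Ioc (0 : ℝ) r ×ˢ Ioc θ₁ θ₂ ⊆ Ioc 0 r ×ˢ Icc θ₁ θ₂ :=
    prod_mono subset_rfl Ioc_subset_Icc_self
  refine Integrable.mono' (integrableOn_rpow_prod hε K hr θ₁ θ₂)
    (((hG.continuousOn_polarIntegrand t u).mono hsub).aestronglyMeasurable hm) ?_
  exact (ae_restrict_iff' hm).2 (ae_of_all _ fun q hq => hG.norm_polarIntegrand_le t u (hsub hq))

theorem IsSymbolOn.norm_inner_integral_le
    (hG : IsSymbolOn (closedSector r θ₁ θ₂) (ε - 2) K G) (hε : 0 < ε) {δ : ℝ} (hδ : 0 ≤ δ)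
    (hδr : δ ≤ r) (h12 : θ₁ ≤ θ₂) (t u : ℝ) :
    ‖∫ q in Ioc 0 δ ×ˢ Ioc θ₁ θ₂, polarIntegrand G t u q‖ ≤ K * (θ₂ - θ₁) / ε * δ ^ ε := by
  have hm : MeasurableSet (Ioc (0 : ℝ) δ ×ˢ Ioc θ₁ θ₂) := measurableSet_Ioc.prod measurableSet_Ioc
  have hsub : Ioc (0 : ℝ) δ ×ˢ Ioc θ₁ θ₂ ⊆ Ioc 0 r ×ˢ Icc θ₁ θ₂ :=
    prod_mono (Ioc_subset_Ioc_right hδr) Ioc_subset_Icc_self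
  refine (norm_integral_le_of_norm_le (integrableOn_rpow_prod hε K hδ θ₁ θ₂)
    ((ae_restrict_iff' hm).2
      (ae_of_all _ fun q hq => hG.norm_polarIntegrand_le t u (hsub hq)))).trans (le_of_eq ?_)
  have h := setIntegral_prod_mul (μ := volume) (ν := volume) (fun x : ℝ => K * x ^ (ε - 1))
    (fun _ : ℝ => (1 : ℝ)) (Ioc 0 δ) (Ioc θ₁ θ₂)
  simp only [mul_one] at h
  rw [Measure.volume_eq_prod, h, ← intervalIntegral.integral_of_le hδ,
    ← intervalIntegral.integral_of_le h12, intervalIntegral.integral_const_mul,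
    integral_rpow (Or.inl (by linarith)), intervalIntegral.integral_const, sub_add_cancel,
    Real.zero_rpow hε.ne']
  simp only [smul_eq_mul, mul_one, sub_zero]
  ring

/-- Decay of the oscillatory integral of a symbol of order `ε - 2` over a sector. -/
theorem IsSymbolOn.norm_sector_integral_le
    (hG : IsSymbolOn (closedSector r θ₁ θ₂) (ε - 2) K G) (hε : 0 < ε) (hr : 0 < r)
    (h12 : θ₁ ≤ θ₂) (h21 : θ₂ ≤ θ₁ + 2 * Real.pi) (t u : ℝ) {δ : ℝ} (hδ : 0 < δ) (hδr : δ ≤ r) :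
    ‖∫ q in Ioo 0 r ×ˢ Ioo θ₁ θ₂, polarIntegrand G t u q‖ ≤
      K * (480 + 7 / ε + 21 * r / ε) * (δ ^ ε + (2 + nrm2 (t, u))⁻¹ *
        (r ^ (ε - 1) + δ ^ (ε - 1) + ∫ ρ in δ..r, ρ ^ (ε - 2))) := by
  have hpi : θ₂ - θ₁ ≤ 7 := by linarith [Real.pi_lt_d2]
  have hK : 0 ≤ K := by
    have := (abs_nonneg _).trans (hG.abs_polar_le ⟨hr, le_rfl⟩ (θ := θ₁) ⟨le_rfl, h12⟩)
    exact nonneg_of_mul_nonneg_left this (Real.rpow_pos_of_pos hr _)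
  have hQ : 0 ≤ ∫ ρ in δ..r, ρ ^ (ε - 2) :=
    intervalIntegral.integral_nonneg hδr fun ρ h => Real.rpow_nonneg (hδ.le.trans h.1) _
  have hset : ∫ q in Ioo 0 r ×ˢ Ioo θ₁ θ₂, polarIntegrand G t u q =
      ∫ q in Ioc 0 r ×ˢ Ioc θ₁ θ₂, polarIntegrand G t u q :=
    setIntegral_congr_set (Measure.set_prod_ae_eq Ioo_ae_eq_Ioc Ioo_ae_eq_Ioc)
  rw [hset]
  set M := nrm2 (t, u) with hMdef
  have hM0 : 0 ≤ M := nrm2_nonneg _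
  set S := r ^ (ε - 1) + δ ^ (ε - 1) + ∫ ρ in δ..r, ρ ^ (ε - 2) with hS
  have hrS : r ^ (ε - 1) ≤ S := by
    have : 0 ≤ δ ^ (ε - 1) := by positivity
    linarith
  have hS0 : 0 ≤ S := (Real.rpow_nonneg hr.le _).trans hrS
  have hδε : 0 ≤ δ ^ ε := by positivity
  have hLS : 0 ≤ (2 + M)⁻¹ * S := by positivity
  rcases le_total M 1 with hM1 | hM1
  · refine (hG.norm_inner_integral_le hε hr.le le_rfl h12 t u).trans ?_
    have e : r ^ ε = r * r ^ (ε - 1) := by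
      nth_rewrite 2 [← Real.rpow_one r]
      rw [← Real.rpow_add hr]; ring_nf
    have hinv : (1 : ℝ) ≤ 3 * (2 + M)⁻¹ := by
      rw [← div_eq_mul_inv, le_div_iff₀ (by linarith)]
      linarith
    calc K * (θ₂ - θ₁) / ε * r ^ ε ≤ K * 7 / ε * (r * S) := by
          rw [e]; gcongr
      _ ≤ K * 7 / ε * (r * S) * (3 * (2 + M)⁻¹) := le_mul_of_one_le_right (by positivity) hinv
      _ = K * (21 * r / ε) * ((2 + M)⁻¹ * S) := by ring
      _ ≤ K * (480 + 7 / ε + 21 * r / ε) * (δ ^ ε + (2 + M)⁻¹ * S) := by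
          have : 0 ≤ 7 / ε := by positivity
          gcongr
          · linarith
          · linarith
  · have hu : Ioc 0 r ×ˢ Ioc θ₁ θ₂ = Ioc 0 δ ×ˢ Ioc θ₁ θ₂ ∪ Ioc δ r ×ˢ Ioc θ₁ θ₂ := by
      rw [← union_prod, Ioc_union_Ioc_eq_Ioc hδ.le hδr]
    have hI := hG.integrableOn_polarIntegrand hε hr.le t u
    rw [hu] at hI ⊢
    rw [setIntegral_union
      (Disjoint.set_prod_left (Ioc_disjoint_Ioc_of_le le_rfl) _ _)
      (measurableSet_Ioc.prod measurableSet_Ioc) hI.left_of_union hI.right_of_union]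
    refine (norm_add_le _ _).trans ?_
    have hMpos : 0 < M := by linarith
    have b1 := hG.norm_inner_integral_le hε hδ.le hδr h12 t u
    have b2 := hG.norm_outer_integral_le hδ hδr h12 h21 (t := t) (u := u) hMpos
    rw [← hMdef, ← hS] at b2
    have hinv : M⁻¹ ≤ 3 * (2 + M)⁻¹ := by
      rw [← div_eq_mul_inv, inv_eq_one_div, div_le_div_iff₀ hMpos (by linarith)]
      linarith
    have b1' : K * (θ₂ - θ₁) / ε * δ ^ ε ≤ K * (7 / ε) * δ ^ ε := by
      rw [mul_div_assoc]; gcongr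
    have b2' : K / M * (160 * S) ≤ K * 480 * ((2 + M)⁻¹ * S) := by
      calc K / M * (160 * S) = K * 160 * S * M⁻¹ := by ring
        _ ≤ K * 160 * S * (3 * (2 + M)⁻¹) := by gcongr
        _ = _ := by ring
    have hc1 : 0 ≤ K * (480 + 21 * r / ε) * δ ^ ε := by positivity
    have hc2 : 0 ≤ K * (7 / ε + 21 * r / ε) * ((2 + M)⁻¹ * S) := by positivity
    linarith

end Sector

/-! ### Exponents -/

theorem integral_rpow_sub_two {ε δ r : ℝ} (hε : ε ≠ 1) (hδ : 0 < δ) (hδr : δ ≤ r) :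
    ∫ ρ in δ..r, ρ ^ (ε - 2) = (r ^ (ε - 1) - δ ^ (ε - 1)) / (ε - 1) := by
  rw [integral_rpow (Or.inr ⟨fun h => hε (by linarith), by
    rw [uIcc_of_le hδr]; exact fun h => hδ.not_ge h.1⟩), show ε - 2 + 1 = ε - 1 by ring]

theorem sector_bound_le {ε r : ℝ} (hr : 0 < r) (d : ℕ) :
    ∃ C > (0 : ℝ), ∀ L : ℝ, 2 ≤ L →
      (ε < 1 → (2 * r / L) ^ ε + L⁻¹ * (r ^ (ε - 1) + (2 * r / L) ^ (ε - 1) +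
          ∫ ρ in (2 * r / L)..r, ρ ^ (ε - 2)) ≤ C * (L ^ (-ε) * Real.log L ^ d)) ∧
      (ε = 1 → (2 * r / L) ^ ε + L⁻¹ * (r ^ (ε - 1) + (2 * r / L) ^ (ε - 1) +
          ∫ ρ in (2 * r / L)..r, ρ ^ (ε - 2)) ≤ C * (L ^ (-(1 : ℝ)) * Real.log L ^ (d + 1))) ∧
      (1 < ε → (2 * r / L) ^ ε + L⁻¹ * (r ^ (ε - 1) + (2 * r / L) ^ (ε - 1) +
          ∫ ρ in (2 * r / L)..r, ρ ^ (ε - 2)) ≤ C * L ^ (-(1 : ℝ))) := by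
  have hlog : ∀ L : ℝ, 2 ≤ L → 1 ≤ 2 * Real.log L := fun L hL => by
    have := Real.log_le_log two_pos hL
    linarith [Real.log_two_gt_d9]
  have hlogd : ∀ L : ℝ, 2 ≤ L → 1 ≤ 2 ^ d * Real.log L ^ d := fun L hL => by
    rw [← mul_pow]; exact one_le_pow₀ (hlog L hL)
  have hδr : ∀ L : ℝ, 2 ≤ L → 2 * r / L ≤ r := fun L hL => by
    rw [div_le_iff₀ (by linarith)]; nlinarith
  have hδpos : ∀ L : ℝ, 2 ≤ L → 0 < 2 * r / L := fun L hL => by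
    have : 0 < L := by linarith
    positivity
  rcases lt_trichotomy ε 1 with h | h | h
  · set B := (2 * r) ^ ε + (r ^ (ε - 1) + (2 * r) ^ (ε - 1) + (2 * r) ^ (ε - 1) / (1 - ε)) with hB
    have h1ε : 0 < 1 - ε := by linarith
    have hBpos : 0 < B := by positivity
    refine ⟨B * 2 ^ d, by positivity, fun L hL => ⟨fun _ => ?_, fun h' => absurd h' h.ne,
      fun h' => absurd h' h.not_gt⟩⟩
    have hL0 : 0 < L := by linarith
    have hδ := hδpos L hL
    have e1 : (2 * r / L) ^ ε = (2 * r) ^ ε * L ^ (-ε) := by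
      rw [Real.div_rpow (by positivity) hL0.le, Real.rpow_neg hL0.le, div_eq_mul_inv]
    have e2 : L⁻¹ * (2 * r / L) ^ (ε - 1) = (2 * r) ^ (ε - 1) * L ^ (-ε) := by
      rw [Real.div_rpow (by positivity) hL0.le, Real.rpow_sub_one hL0.ne', Real.rpow_neg hL0.le]
      field_simp
    have e3 : L⁻¹ ≤ L ^ (-ε) := by
      rw [← Real.rpow_neg_one]
      exact Real.rpow_le_rpow_of_exponent_le (by linarith) (by linarith)
    have e4 : ∫ ρ in (2 * r / L)..r, ρ ^ (ε - 2) ≤ (2 * r / L) ^ (ε - 1) / (1 - ε) := by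
      rw [integral_rpow_sub_two h.ne hδ (hδr L hL), ← neg_div_neg_eq]
      rw [show -(ε - 1) = 1 - ε by ring]
      have : 0 ≤ r ^ (ε - 1) := by positivity
      gcongr
      linarith
    have hLε : 0 < L ^ (-ε) := by positivity
    calc _ ≤ (2 * r) ^ ε * L ^ (-ε) + L⁻¹ * (r ^ (ε - 1) + (2 * r / L) ^ (ε - 1) +
            (2 * r / L) ^ (ε - 1) / (1 - ε)) := by rw [e1]; gcongr
      _ = (2 * r) ^ ε * L ^ (-ε) + (L⁻¹ * r ^ (ε - 1) + L⁻¹ * (2 * r / L) ^ (ε - 1) +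
            L⁻¹ * (2 * r / L) ^ (ε - 1) / (1 - ε)) := by ring
      _ ≤ (2 * r) ^ ε * L ^ (-ε) + (L ^ (-ε) * r ^ (ε - 1) + (2 * r) ^ (ε - 1) * L ^ (-ε) +
            (2 * r) ^ (ε - 1) * L ^ (-ε) / (1 - ε)) := by rw [e2]; gcongr
      _ = B * L ^ (-ε) := by rw [hB]; ring
      _ ≤ B * L ^ (-ε) * (2 ^ d * Real.log L ^ d) :=
          le_mul_of_one_le_right (by positivity) (hlogd L hL)
      _ = _ := by ring
  · subst h
    refine ⟨(4 * r + 5) * 2 ^ d, by positivity, fun L hL => ⟨fun h' => absurd h' (lt_irrefl _),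
      fun _ => ?_, fun h' => absurd h' (lt_irrefl _)⟩⟩
    have hL0 : 0 < L := by linarith
    have hδ := hδpos L hL
    have eQ : ∫ ρ in (2 * r / L)..r, ρ ^ ((1 : ℝ) - 2) = Real.log (L / 2) := by
      rw [show (1 : ℝ) - 2 = -1 by norm_num]
      simp only [Real.rpow_neg_one]
      rw [integral_inv_of_pos hδ hr]
      congr 1
      field_simp
    have hQ : Real.log (L / 2) ≤ Real.log L := Real.log_le_log (by positivity) (by linarith)
    rw [eQ, sub_self, Real.rpow_zero, Real.rpow_zero, Real.rpow_one, Real.rpow_neg_one]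
    have h1 := hlog L hL
    have hlp : 0 < Real.log L := by linarith
    calc 2 * r / L + L⁻¹ * (1 + 1 + Real.log (L / 2))
        = L⁻¹ * (2 * r * 1 + 2 * 1 + Real.log (L / 2)) := by ring
      _ ≤ L⁻¹ * (2 * r * (2 * Real.log L) + 2 * (2 * Real.log L) + Real.log L) := by gcongr
      _ = (4 * r + 5) * (L⁻¹ * Real.log L) := by ring
      _ ≤ (4 * r + 5) * (L⁻¹ * Real.log L) * (2 ^ d * Real.log L ^ d) :=
          le_mul_of_one_le_right (by positivity) (hlogd L hL)
      _ = _ := by ring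
  · have hε1 : 0 < ε - 1 := by linarith
    set B := r ^ (ε - 1) * (2 * r + 2 + 1 / (ε - 1)) with hB
    refine ⟨B, by positivity, fun L hL => ⟨fun h' => absurd h' h.not_gt,
      fun h' => absurd h' h.ne', fun _ => ?_⟩⟩
    have hL0 : 0 < L := by linarith
    have hδ := hδpos L hL
    have hle : (2 * r / L) ^ (ε - 1) ≤ r ^ (ε - 1) :=
      Real.rpow_le_rpow hδ.le (hδr L hL) hε1.le
    have e1 : (2 * r / L) ^ ε = (2 * r / L) ^ (ε - 1) * (2 * r / L) := by
      rw [Real.rpow_sub_one hδ.ne', div_mul_cancel₀ _ hδ.ne']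
    have e4 : ∫ ρ in (2 * r / L)..r, ρ ^ (ε - 2) ≤ r ^ (ε - 1) / (ε - 1) := by
      rw [integral_rpow_sub_two h.ne' hδ (hδr L hL)]
      have : 0 ≤ (2 * r / L) ^ (ε - 1) := by positivity
      gcongr
      linarith
    rw [e1, Real.rpow_neg_one]
    calc _ ≤ r ^ (ε - 1) * (2 * r / L) +
          L⁻¹ * (r ^ (ε - 1) + r ^ (ε - 1) + r ^ (ε - 1) / (ε - 1)) := by gcongr
      _ = _ := by rw [hB]; ring

/-- A power that is dominated near `0` by `τ ^ ε |log τ| ^ d` has exponent at least `ε`. -/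
theorem exponent_le_of_rpow_le {σ ε k c τ₀ : ℝ} {d : ℕ} (hk : 0 < k) (hc : 0 < c) (hτ₀ : 0 < τ₀)
    (h : ∀ τ : ℝ, 0 < τ → τ < τ₀ → k * τ ^ σ ≤ c * τ ^ ε * |Real.log τ| ^ d) : ε ≤ σ := by
  by_contra! hlt
  have ho := (isLittleO_abs_log_rpow_rpow_nhdsGT_zero (s := σ - ε) (d : ℝ)
    (by linarith)).bound (c := k / (2 * c)) (by positivity)
  have hev : ∀ᶠ τ : ℝ in 𝓝[>] 0, τ ∈ Ioo 0 τ₀ := Ioo_mem_nhdsGT hτ₀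
  obtain ⟨τ, hb, hτ0, hτ1⟩ := (ho.and hev).exists
  have h1 := h τ hτ0 hτ1
  rw [Real.rpow_natCast, Real.norm_of_nonneg (by positivity),
    Real.norm_of_nonneg (by positivity), Real.rpow_sub hτ0] at hb
  have hσ : 0 < τ ^ σ := by positivity
  have hε : 0 < τ ^ ε := by positivity
  have h2 : c * τ ^ ε * |Real.log τ| ^ d ≤ c * τ ^ ε * (k / (2 * c) * (τ ^ σ / τ ^ ε)) := by
    gcongr
  have h3 : c * τ ^ ε * (k / (2 * c) * (τ ^ σ / τ ^ ε)) = k / 2 * τ ^ σ := by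
    field_simp
  nlinarith

theorem IsSymbolOn.mono_order {Z : Set (ℝ × ℝ)} (hZ : ∀ p ∈ Z, 0 < nrm2 p) {r s s' K : ℝ}
    (hr : ∀ p ∈ Z, nrm2 p ≤ r) (hs : s' ≤ s) (hK : 0 ≤ K) {G : ℝ × ℝ → ℝ}
    (h : IsSymbolOn Z s K G) : IsSymbolOn Z s' (K * r ^ (s - s')) G := by
  have key : ∀ p ∈ Z, ∀ a : ℝ, K * nrm2 p ^ (s - a) ≤ K * r ^ (s - s') * nrm2 p ^ (s' - a) := by
    intro p hp a
    have h0 := hZ p hp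
    rw [show s - a = (s - s') + (s' - a) by ring, Real.rpow_add h0, mul_assoc]
    have := Real.rpow_le_rpow h0.le (hr p hp) (sub_nonneg.2 hs)
    gcongr
  refine ⟨h.contDiffAt, fun p hp => (h.abs_le p hp).trans ?_,
    fun p hp => (h.fderiv_le p hp).trans (key p hp 1)⟩
  simpa using key p hp 0

/-! ### The standard function on a wedge -/

theorem stdFun_nonneg (n : ℕ) (f : Fin n → ℝ × ℝ → ℝ) (γ : Fin n → ℝ) (E : Set (ℝ × ℝ))
    (p : ℝ × ℝ) : 0 ≤ stdFun n f γ E p :=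
  indicator_nonneg (fun _ _ => Finset.prod_nonneg fun _ _ => Real.rpow_nonneg (abs_nonneg _) _) p

theorem measureReal_annularSector {θ₁ θ₂ a b : ℝ} (h12 : θ₁ ≤ θ₂) (h : θ₂ ≤ θ₁ + 2 * Real.pi)
    (ha : 0 ≤ a) (hab : a ≤ b) :
    volume.real (polarPt '' (Ioo a b ×ˢ Ioo θ₁ θ₂)) = (b ^ 2 - a ^ 2) / 2 * (θ₂ - θ₁) := by
  have h1 := setIntegral_image_polarPt (b := b) h ha fun _ => (1 : ℝ)
  have h2 := setIntegral_prod_mul (μ := volume) (ν := volume) (fun x : ℝ => x)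
    (fun _ : ℝ => (1 : ℝ)) (Ioo a b) (Ioo θ₁ θ₂)
  simp only [setIntegral_const, smul_eq_mul, mul_one] at h1 h2
  rw [h1, Measure.volume_eq_prod, h2, ← integral_Ioc_eq_integral_Ioo,
    ← intervalIntegral.integral_of_le hab, integral_id, Real.volume_real_Ioo_of_le h12]

theorem measurableSet_annularSector {θ₁ θ₂ a b : ℝ} (h : θ₂ ≤ θ₁ + 2 * Real.pi) (ha : 0 ≤ a) :
    MeasurableSet (polarPt '' (Ioo a b ×ˢ Ioo θ₁ θ₂)) :=
  (measurableSet_Ioo.prod measurableSet_Ioo).image_of_continuousOn_injOn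
    continuous_polarPt.continuousOn
    ((injOn_polarPt h).mono (prod_mono (fun _ hx => ha.trans_lt hx.1) subset_rfl))

/-- The ball exponent is at most `s + 2` if `g` is at least of size `|p| ^ s` on a wedge. -/
theorem ballExponent_le {g : ℝ × ℝ → ℝ} {ε s k r R θ₁ θ₂ : ℝ} {d : ℕ} (hball : BallBound g ε d)
    (hg : ∀ p, 0 ≤ g p) (hint : IntegrableOn g (disk2 R)) (hr : 0 < r) (hrR : r < R)
    (h12 : θ₁ < θ₂) (h21 : θ₂ ≤ θ₁ + 2 * Real.pi) (hk : 0 < k)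
    (hlow : ∀ p ∈ polarPt '' (Ioo 0 r ×ˢ Ioo θ₁ θ₂), k * nrm2 p ^ s ≤ g p) : ε ≤ s + 2 := by
  obtain ⟨-, -, _, -, c₂, hc₂, c₃, hc₃, hb⟩ := hball
  obtain ⟨k₁, hk₁, _, -, hcomp⟩ := rpow_comparable one_half_pos one_pos s
  have hθ : 0 < θ₂ - θ₁ := sub_pos.2 h12
  refine exponent_le_of_rpow_le (k := k * k₁ * (3 / 8 * (θ₂ - θ₁))) (c := c₂) (τ₀ := min r c₃)
    (d := d) (by positivity) hc₂ (lt_min hr hc₃) fun τ hτ0 hτ => ?_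
  have hτr := hτ.trans_le (min_le_left _ _)
  refine le_trans ?_ (hb τ hτ0 (hτ.trans_le (min_le_right _ _))).2
  set S := polarPt '' (Ioo (τ / 2) τ ×ˢ Ioo θ₁ θ₂) with hS
  have hSm : MeasurableSet S := measurableSet_annularSector h21 (by positivity)
  have hSsub : S ⊆ disk2 τ := by
    rintro _ ⟨q, hq, rfl⟩
    have h0 : 0 ≤ q.1 := (half_pos hτ0).le.trans hq.1.1.le
    rw [mem_disk2_iff hτ0.le, nrm2_polarPt h0]
    exact hq.1.2
  have hdisk : disk2 τ ⊆ disk2 R := fun p hp => by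
    rw [mem_disk2_iff (by linarith)] at hp ⊢
    linarith
  have hintτ : IntegrableOn g (disk2 τ) := hint.mono_set hdisk
  have hvol : volume.real S = 3 / 8 * (θ₂ - θ₁) * τ ^ 2 := by
    rw [hS, measureReal_annularSector h12.le h21 (by positivity) (by linarith)]
    ring
  have hfin : volume S ≠ ⊤ := by
    intro htop
    have h0 : volume.real S = 0 := by simp [Measure.real, htop]
    rw [hvol] at h0
    have : 0 < 3 / 8 * (θ₂ - θ₁) * τ ^ 2 := by positivity
    exact this.ne' h0
  have hge : ∀ p ∈ S, k * k₁ * τ ^ s ≤ g p := by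
    rintro _ ⟨q, hq, rfl⟩
    have hq1 : τ / 2 < q.1 := hq.1.1
    have hq2 : q.1 < τ := hq.1.2
    have h0 : 0 < q.1 := (half_pos hτ0).trans hq1
    refine le_trans ?_ (hlow _ ⟨q, ⟨⟨h0, hq2.trans hτr⟩, hq.2⟩, rfl⟩)
    rw [nrm2_polarPt h0.le, mul_assoc]
    exact mul_le_mul_of_nonneg_left
      (hcomp q.1 τ hτ0 (by linarith) (by linarith)).1 hk.le
  calc k * k₁ * (3 / 8 * (θ₂ - θ₁)) * τ ^ (s + 2)
      = k * k₁ * τ ^ s * volume.real S := by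
        rw [hvol, Real.rpow_add hτ0, Real.rpow_two]; ring
    _ ≤ ∫ p in S, g p :=
        setIntegral_ge_of_const_le_real hSm hfin hge (hintτ.mono_set hSsub)
    _ ≤ ∫ p in disk2 τ, g p :=
        setIntegral_mono_set hintτ (ae_of_all _ hg) hSsub.eventuallyLE

theorem oscInt_sector {r θ₁ θ₂ : ℝ} (h21 : θ₂ ≤ θ₁ + 2 * Real.pi) {h G : ℝ × ℝ → ℝ}
    (hh : ∀ p ∈ polarPt '' (Ioo 0 r ×ˢ Ioo θ₁ θ₂), h p = G p) (t u : ℝ) :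
    oscInt h (polarPt '' (Ioo 0 r ×ˢ Ioo θ₁ θ₂)) t u =
      ∫ q in Ioo 0 r ×ˢ Ioo θ₁ θ₂, polarIntegrand G t u q := by
  rw [oscInt, setIntegral_image_polarPt h21 le_rfl]
  refine setIntegral_congr_fun (measurableSet_Ioo.prod measurableSet_Ioo) fun q hq => ?_
  have e : t * (polarPt q).1 + u * (polarPt q).2 = q.1 * angPhase t u q.2 := by
    simp only [polarPt, angPhase]; ring
  simp only [polarIntegrand, hh _ (mem_image_of_mem polarPt hq), Complex.real_smul, ← e]
  push_cast
  rw [← mul_assoc]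

/-- Bounds on an open sector for a function continuous on the closed one extend to the latter. -/
theorem closedSector_comparable {r θ₁ θ₂ c c' : ℝ} {m : ℕ} {f : ℝ × ℝ → ℝ} (hr : 0 < r)
    (h12 : θ₁ < θ₂) (hf : ∀ p, nrm2 p ≤ r → ContinuousAt f p)
    (h : ∀ p ∈ polarPt '' (Ioo 0 r ×ˢ Ioo θ₁ θ₂),
      c * nrm2 p ^ m < |f p| ∧ |f p| < c' * nrm2 p ^ m) :
    ∀ p ∈ closedSector r θ₁ θ₂, c * nrm2 p ^ m ≤ |f p| ∧ |f p| ≤ c' * nrm2 p ^ m := by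
  have hcl : closure (Ioo 0 r ×ˢ Ioo θ₁ θ₂) = Icc 0 r ×ˢ Icc θ₁ θ₂ := by
    rw [closure_prod_eq, closure_Ioo hr.ne, closure_Ioo h12.ne]
  have hc1 : ContinuousOn (fun q => |f (polarPt q)|) (closure (Ioo 0 r ×ˢ Ioo θ₁ θ₂)) := by
    rw [hcl]
    intro q hq
    have hq' : nrm2 (polarPt q) ≤ r := by
      rw [nrm2_polarPt hq.1.1]; exact hq.1.2
    exact (ContinuousAt.comp (f := polarPt) (hf _ hq')
      continuous_polarPt.continuousAt).abs.continuousWithinAt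
  have hc2 : ∀ a : ℝ, ContinuousOn (fun q : ℝ × ℝ => a * nrm2 (polarPt q) ^ m)
      (closure (Ioo 0 r ×ˢ Ioo θ₁ θ₂)) := fun a =>
    (continuous_const.mul ((continuous_nrm2.comp continuous_polarPt).pow m)).continuousOn
  rintro _ ⟨q, hq, rfl⟩
  have hq' : q ∈ closure (Ioo 0 r ×ˢ Ioo θ₁ θ₂) := by
    rw [hcl]; exact ⟨Ioc_subset_Icc_self hq.1, hq.2⟩
  exact ⟨le_on_closure (fun x hx => (h _ (mem_image_of_mem _ hx)).1.le) (hc2 c) hc1 hq',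
    le_on_closure (fun x hx => (h _ (mem_image_of_mem _ hx)).2.le) hc1 (hc2 c') hq'⟩

theorem prod_abs_rpow_ge {n : ℕ} {f : Fin n → ℝ × ℝ → ℝ} {γ : Fin n → ℝ} {m : Fin n → ℕ}
    {Z : Set (ℝ × ℝ)} (hZ : ∀ p ∈ Z, 0 < nrm2 p)
    (h : ∀ i, ∃ c > (0 : ℝ), ∃ c' > (0 : ℝ), ∀ p ∈ Z,
      c * nrm2 p ^ m i < |f i p| ∧ |f i p| < c' * nrm2 p ^ m i) :
    ∃ k > (0 : ℝ), ∀ p ∈ Z, k * nrm2 p ^ (∑ i, γ i * m i) ≤ ∏ i, |f i p| ^ γ i := by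
  have h1 : ∀ i, ∃ k > (0 : ℝ), ∀ p ∈ Z, k * nrm2 p ^ (γ i * m i) ≤ |f i p| ^ γ i := by
    intro i
    obtain ⟨c, hc, c', hc', hb⟩ := h i
    obtain ⟨k, hk, _, -, hcomp⟩ := rpow_comparable hc hc' (γ i)
    refine ⟨k, hk, fun p hp => ?_⟩
    have := (hcomp _ _ (pow_pos (hZ p hp) (m i)) (hb p hp).1.le (hb p hp).2.le).1
    rwa [← Real.rpow_natCast, ← Real.rpow_mul (hZ p hp).le, mul_comm (m i : ℝ)] at this
  choose k hk hkb using h1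
  refine ⟨∏ i, k i, Finset.prod_pos fun i _ => hk i, fun p hp => ?_⟩
  rw [Real.rpow_sum_of_pos (hZ p hp), ← Finset.prod_mul_distrib]
  refine Finset.prod_le_prod (fun i _ => ?_) fun i _ => hkb i p hp
  exact mul_nonneg (hk i).le (Real.rpow_nonneg (hZ p hp).le _)

/-- The radii on which the local hypotheses on the `fᵢ` are available. -/
theorem StandardForm.exists_radius {n : ℕ} {f : Fin n → ℝ × ℝ → ℝ} {γ : Fin n → ℝ}
    {E : Set (ℝ × ℝ)} (h : StandardForm n f γ E) :
    ∃ R > (0 : ℝ), IntegrableOn (stdFun n f γ E) (disk2 R) ∧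
      ∀ i, (∀ p, nrm2 p < R → AnalyticAt ℝ (f i) p) ∧
        ∃ K, 0 ≤ K ∧ ∀ p, nrm2 p < R →
          ‖fderiv ℝ (f i) p‖ * nrm2 p ≤ K * nrm2 p ^ vanishingOrder (f i) := by
  obtain ⟨U, hU, hUf⟩ := h.analytic
  obtain ⟨V, hV, hVi⟩ := h.integ
  choose K hK hKb using fun i => fderiv_mul_nrm2_le (hUf i 0 (mem_of_mem_nhds hU))
  have hev : ∀ᶠ p in 𝓝 (0 : ℝ × ℝ), p ∈ U ∧ p ∈ V ∧ ∀ i,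
      ‖fderiv ℝ (f i) p‖ * nrm2 p ≤ K i * nrm2 p ^ vanishingOrder (f i) :=
    (eventually_mem_set.2 hU).and ((eventually_mem_set.2 hV).and (eventually_all.2 hKb))
  obtain ⟨R, hR, hb⟩ := Metric.eventually_nhds_iff.1 hev
  have hb' : ∀ p, nrm2 p < R → _ := fun p hp =>
    hb (y := p) (by rw [dist_zero_right]; exact (norm_le_nrm2 p).trans_lt hp)
  refine ⟨R, hR, hVi.mono_set fun p hp => (hb' p ((mem_disk2_iff hR.le).1 hp)).2.1, fun i =>
    ⟨fun p hp => hUf i p (hb' p hp).1, K i, (hK i).le, fun p hp => (hb' p hp).2.2 i⟩⟩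

theorem wedge_decay_estimate_first_type {n : ℕ} (f : Fin n → ℝ × ℝ → ℝ) (γ : Fin n → ℝ)
    (E : Set (ℝ × ℝ)) (hsf : StandardForm n f γ E)
    (ε : ℝ) (d : ℕ) (hball : BallBound (stdFun n f γ E) ε d) :
    ∃ R > (0:ℝ), ∀ r : ℝ, 0 < r → r < R →
      ∀ B' : Set (ℝ × ℝ), IsFirstTypeWedge n f E r B' →
      ∀ A C : ℝ, ∃ Ca > (0:ℝ), ∀ α : ℝ × ℝ → ℝ, AlphaBound α A →
        FirstTypeEstimate α (stdFun n f γ E) B' C →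
        ∀ t u : ℝ,
          (ε < 1 →
            ‖oscInt (fun p => α p * stdFun n f γ E p) B' t u‖ ≤
              Ca * (2 + nrm2 (t, u)) ^ (-ε) * Real.log (2 + nrm2 (t, u)) ^ d) ∧
          (ε = 1 →
            ‖oscInt (fun p => α p * stdFun n f γ E p) B' t u‖ ≤
              Ca * (2 + nrm2 (t, u)) ^ (-(1:ℝ)) * Real.log (2 + nrm2 (t, u)) ^ (d + 1)) ∧
          (1 < ε →
            ‖oscInt (fun p => α p * stdFun n f γ E p) B' t u‖ ≤
              Ca * (2 + nrm2 (t, u)) ^ (-(1:ℝ))) := by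
  obtain ⟨R, hR, hint, hf⟩ := hsf.exists_radius
  refine ⟨R, hR, fun r hr hrR B' hB' A C => ?_⟩
  obtain ⟨θ₁, θ₂, h12, h21, rfl⟩ := isWedge_eq_image hB'.wedge
  set W := polarPt '' (Ioo 0 r ×ˢ Ioo θ₁ θ₂) with hW
  have hWpos : ∀ p ∈ W, 0 < nrm2 p := by
    rintro _ ⟨q, hq, rfl⟩
    rw [nrm2_polarPt hq.1.1.le]
    exact hq.1.1
  have hconn : IsPreconnected W :=
    (isPreconnected_Ioo.prod isPreconnected_Ioo).image _ continuous_polarPt.continuousOn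
  have hsub : W ⊆ closure W \ {0} := fun p hp =>
    ⟨subset_closure hp, fun h0 => (hWpos p hp).ne' (by rw [mem_singleton_iff.1 h0, nrm2_zero])⟩
  have hdisj : Disjoint W (frontier E) := hB'.boundary.mono_left hsub
  have hL2 : ∀ t u : ℝ, 2 ≤ 2 + nrm2 (t, u) := fun t u => by linarith [nrm2_nonneg (t, u)]
  rcases hconn.subset_or_disjoint_of_frontier hdisj with hE | hE
  swap
  · refine ⟨1, one_pos, fun α _ _ t u => ?_⟩
    have hz : ‖oscInt (fun p => α p * stdFun n f γ E p) W t u‖ = 0 := by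
      rw [norm_eq_zero, hW, oscInt_sector h21 (G := fun _ => 0) fun p hp => by
        rw [stdFun, indicator_of_notMem (disjoint_left.1 hE hp), mul_zero]]
      simp [polarIntegrand]
    rw [hz]
    have hLpos : 0 < 2 + nrm2 (t, u) := by linarith [hL2 t u]
    have hlog : 0 ≤ Real.log (2 + nrm2 (t, u)) := Real.log_nonneg (by linarith [hL2 t u])
    exact ⟨fun _ => by positivity, fun _ => by positivity, fun _ => by positivity⟩
  set P : ℝ × ℝ → ℝ := fun p => ∏ i, |f i p| ^ γ i with hP
  have hstd : ∀ p ∈ W, stdFun n f γ E p = P p := fun p hp => indicator_of_mem (hE hp) _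
  set s := ∑ i, γ i * vanishingOrder (f i) with hs
  obtain ⟨k, hk, hlow⟩ := prod_abs_rpow_ge (γ := γ) hWpos hB'.comparable
  have hεs : ε ≤ s + 2 := ballExponent_le hball (stdFun_nonneg n f γ E) hint hr hrR h12 h21 hk
    fun p hp => by rw [hstd p hp]; exact hlow p hp
  set Z := closedSector r θ₁ θ₂ with hZdef
  have hZpos : ∀ p ∈ Z, 0 < nrm2 p := closedSector_nrm2_pos
  have hZle : ∀ p ∈ Z, nrm2 p ≤ r := by
    rintro _ ⟨q, hq, rfl⟩
    rw [nrm2_polarPt hq.1.1.le]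
    exact hq.1.2
  obtain ⟨K, hK, hsym⟩ := IsSymbolOn.prod hZpos Finset.univ
    (fun i => γ i * vanishingOrder (f i)) (fun i p => |f i p| ^ γ i) fun i _ => by
      obtain ⟨c, hc, c', hc', hb⟩ := hB'.comparable i
      obtain ⟨hfa, K, hK, hKb⟩ := hf i
      have hcomp := closedSector_comparable hr h12
        (fun p hp => (hfa p (hp.trans_lt hrR)).continuousAt) hb
      exact isSymbolOn_abs_rpow hZpos (γ i) hc hc' hK
        (fun p hp => (hfa p ((hZle p hp).trans_lt hrR)).contDiffAt)
        (fun p hp => (hcomp p hp).1) (fun p hp => (hcomp p hp).2)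
        (fun p hp => hKb p ((hZle p hp).trans_lt hrR))
  obtain ⟨C₀, hC₀, hfinal⟩ := sector_bound_le (ε := ε) hr d
  have hε := hball.1
  set K₀ := 2 * (2 * A * K) * r ^ (0 + s - (ε - 2)) * (480 + 7 / ε + 21 * r / ε) with hK₀
  refine ⟨|K₀| * C₀ + 1, by positivity, fun α hα _ t u => ?_⟩
  have hA : 0 ≤ A := (abs_nonneg _).trans (hα.2.1 0)
  have hG := ((hα.isSymbolOn hZpos).mul hZpos hsym).mono_order hZpos hZle
    (s' := ε - 2) (by linarith) (by positivity)
  set L := 2 + nrm2 (t, u) with hL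
  have hL2' : 2 ≤ L := hL2 t u
  have hLpos : 0 < L := by linarith
  have hlog : 0 ≤ Real.log L := Real.log_nonneg (by linarith)
  have hδr : 2 * r / L ≤ r := by
    rw [div_le_iff₀ hLpos]; nlinarith
  have hmain := hG.norm_sector_integral_le hε hr h12.le h21 t u (δ := 2 * r / L) (by positivity) hδr
  rw [← oscInt_sector h21 (h := fun p => α p * stdFun n f γ E p)
    fun p hp => by rw [hstd p hp], ← hW, ← hK₀, ← hL] at hmain
  have hup : ∀ X Y : ℝ, 0 ≤ Y → ‖oscInt (fun p => α p * stdFun n f γ E p) W t u‖ ≤ K₀ * X →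
      X ≤ C₀ * Y → ‖oscInt (fun p => α p * stdFun n f γ E p) W t u‖ ≤ (|K₀| * C₀ + 1) * Y := by
    intro X Y hY h1 h2
    have hK₀' : 0 ≤ K₀ := by positivity
    rw [abs_of_nonneg hK₀']
    have := mul_le_mul_of_nonneg_left h2 hK₀'
    linarith
  obtain ⟨f1, f2, f3⟩ := hfinal L hL2'
  refine ⟨fun h => ?_, fun h => ?_, fun h => ?_⟩
  · rw [mul_assoc]
    exact hup _ _ (by positivity) hmain (f1 h)
  · rw [mul_assoc]
    exact hup _ _ (by positivity) hmain (f2 h)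
  · exact hup _ _ (by positivity) hmain (f3 h)
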